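/- Let S be a finite set and (W_n)_{n≥1} a sequence of S-colored graphons. Then the following are equivalent: (i) the sequence left-converges, i.e. for every S-colored finite simple graph H the sequence of colored homomorphism densities t_S(H, W_n) converges in ℝ; (ii) (W_n) is a Cauchy sequence with respect to the metric δ_□^S. -/

import Mathlib

/-!
Left-convergence of a Cauchy sequence is the colored counting lemma `abs_homDens_sub_le`: the cut
norm bounds integrals against products of `[0,1]`-valued test functions in separate variables, so
replacing the kernel in one edge factor costs at most the cut norm (once all variables but the two
ends of the edge are frozen, the other factors form such a product), and replacing the coloring at
one vertex costs at most the measure of the set where the colorings disagree. Homomorphism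
densities are invariant under measure-preserving maps (`homDens_comp`), so they are Lipschitz for
the colored cut distance.

The converse rests on a finite inverse counting lemma, `finite_inverse_counting`: two weighted
colored graphs on `k * m` vertices whose densities of colored graphs on `k` vertices almost agree
are close in cut norm after a permutation. Given such a graph, draw `k` vertices at random and turn
the weights between them into random edges. The distribution of the resulting colored simple graph
is determined by the densities through inclusion–exclusion (`WGraph.ind_eq`), so the two graphs
have nearly equal sample distributions. A random sample is, with probability at least `3/4`, close
to the graph it came from, in the sense that the blow-up of the sample by `m` is close to a
permutation of the graph (`exists_sample_size`); hence some outcome is close to both graphs.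

Closeness of samples is proved by weak regularity with a bounded number of parts refining the color
classes (`regularity`). The weights are replaced by a step function; the difference between the
sample and the sampled step function has small expected four-cycle sum (`expect_sampleC4_le`), and
four-cycles control the cut norm (`cutLe_of_fourCycle`); by a second moment bound the sample visits
the parts with almost the right frequencies, so that the vertices can be matched to the blow-up
preserving the parts (`good_of_sample`).

Graphons are reduced to finite graphs by approximating the kernel in `L¹`, and the coloring in
measure, by step functions on all sufficiently fine uniform grids of `[0,1]` (`exists_step`). Any
two members of the sequence are so approximated on one grid of `k * m` cells, the counting lemma
transfers the densities, and the permutation given by the inverse counting lemma is realised by the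
interval exchange `cellPerm`, a measure-preserving bijection of `[0,1]`.
-/

open MeasureTheory Set Filter
open scoped symmDiff

noncomputable section

/-- The unit interval `[0,1]` as a subset of `ℝ`. -/
def I01 : Set ℝ := Set.Icc 0 1

/-- A graphon: a symmetric measurable kernel with values in `[0,1]`. -/
structure Graphon where
  W : ℝ → ℝ → ℝ
  measurable : Measurable (Function.uncurry W)
  symm : ∀ x y, W x y = W y x
  nonneg : ∀ x y, 0 ≤ W x y
  le_one : ∀ x y, W x y ≤ 1

/-- The cut norm `‖U‖_□` of a kernel `U`. -/
def cutNorm (U : ℝ → ℝ → ℝ) : ℝ :=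
  sSup { r | ∃ A B : Set ℝ, MeasurableSet A ∧ MeasurableSet B ∧ A ⊆ I01 ∧ B ⊆ I01 ∧
    r = |∫ x in A, ∫ y in B, U x y| }

/-- A measure-preserving bijection of `[0,1]`. -/
def IsMPB (σ : ℝ → ℝ) : Prop :=
  Measurable σ ∧ Set.BijOn σ I01 I01 ∧
    MeasurePreserving σ (volume.restrict I01) (volume.restrict I01)

/-- An `S`-colored graphon: a graphon together with a coloring `c : [0,1] → S` with
measurable color classes. -/
structure CGraphon (S : Type*) where
  K : Graphon
  c : ℝ → S
  measC : ∀ s : S, MeasurableSet (c ⁻¹' {s})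

/-- The color part of the colored cut distance:
`Σ_{s ∈ S} μ(c⁻¹(s) Δ c'⁻¹(s))` (color classes as subsets of `[0,1]`). -/
def colorDist {S : Type*} [Fintype S] (c c' : ℝ → S) : ℝ :=
  ∑ s : S, (volume ((I01 ∩ c ⁻¹' {s}) ∆ (I01 ∩ c' ⁻¹' {s}))).toReal

/-- The colored cut distance `δ_□^S(W, W') = inf_σ ‖W − (W')^σ‖_□^S`, the infimum running
over measure-preserving bijections `σ` of `[0,1]`. -/
def deltaCutS {S : Type*} [Fintype S] (W W' : CGraphon S) : ℝ :=
  sInf { r | ∃ σ, IsMPB σ ∧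
    r = cutNorm (fun x y => W.K.W x y - W'.K.W (σ x) (σ y))
        + colorDist W.c fun y => W'.c (σ y) }

/-- The colored homomorphism density `t_S(H, W)` of an `S`-colored finite simple graph
`(H, c_H)` in an `S`-colored graphon `W`. -/
def tS {V : Type} [Fintype V] [DecidableEq V] (H : SimpleGraph V) [DecidableRel H.Adj]
    {S : Type*} [DecidableEq S] (cH : V → S) (W : CGraphon S) : ℝ :=
  ∫ x : V → ℝ,
    ((∏ e ∈ H.edgeFinset,
        Sym2.lift ⟨fun u w => W.K.W (x u) (x w), fun _ _ => W.K.symm _ _⟩ e) *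
      ∏ v : V, (if W.c (x v) = cH v then (1 : ℝ) else 0))
    ∂(Measure.pi fun _ => volume.restrict I01)

open scoped BigOperators

/-! ### The cut norm of a finite matrix -/

/-- `CutLe A ε` says that the normalised cut norm of the matrix `A` is at most `ε`. The test
vectors range over `[-1,1]` instead of `{0,1}`; this changes the norm by at most a factor `4`
and makes the class of test vectors closed under the products that occur in four-cycles. -/
def CutLe {ι : Type*} [Fintype ι] (A : ι → ι → ℝ) (ε : ℝ) : Prop :=
  ∀ a b : ι → ℝ, (∀ i, |a i| ≤ 1) → (∀ i, |b i| ≤ 1) →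
    |∑ i, ∑ j, a i * b j * A i j| ≤ ε * (Fintype.card ι : ℝ) ^ 2

lemma CutLe.mono {ι : Type*} [Fintype ι] {A : ι → ι → ℝ} {ε ε' : ℝ} (h : CutLe A ε)
    (hε : ε ≤ ε') : CutLe A ε' := fun a b ha hb =>
  (h a b ha hb).trans (by gcongr)

lemma CutLe.add {ι : Type*} [Fintype ι] {A B : ι → ι → ℝ} {ε ε' : ℝ} (h : CutLe A ε)
    (h' : CutLe B ε') : CutLe (fun i j => A i j + B i j) (ε + ε') := fun a b ha hb => by
  have h1 := h a b ha hb
  have h2 := h' a b ha hb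
  simp only [mul_add, Finset.sum_add_distrib, add_mul]
  exact (abs_add_le _ _).trans (add_le_add h1 h2)

lemma CutLe.neg {ι : Type*} [Fintype ι] {A : ι → ι → ℝ} {ε : ℝ} (h : CutLe A ε) :
    CutLe (fun i j => - A i j) ε := fun a b ha hb => by
  have h1 := h a b ha hb
  simpa only [mul_neg, Finset.sum_neg_distrib, abs_neg] using h1

lemma CutLe.perm {ι : Type*} [Fintype ι] {A : ι → ι → ℝ} {ε : ℝ} (h : CutLe A ε)
    (π : Equiv.Perm ι) : CutLe (fun i j => A (π i) (π j)) ε := fun a b ha hb => by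
  have h1 := h (fun i => a (π.symm i)) (fun i => b (π.symm i)) (fun i => ha _) (fun i => hb _)
  refine le_of_eq_of_le (congrArg _ ?_) h1
  symm
  rw [← Equiv.sum_comp π]
  refine Finset.sum_congr rfl fun i _ => ?_
  rw [← Equiv.sum_comp π]
  simp

lemma cutLe_of_sum_abs {ι : Type*} [Fintype ι] {A : ι → ι → ℝ} {ε : ℝ}
    (h : ∑ i, ∑ j, |A i j| ≤ ε * (Fintype.card ι : ℝ) ^ 2) : CutLe A ε := fun a b ha hb => by
  refine le_trans ?_ h
  refine (Finset.abs_sum_le_sum_abs _ _).trans (Finset.sum_le_sum fun i _ => ?_)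
  refine (Finset.abs_sum_le_sum_abs _ _).trans (Finset.sum_le_sum fun j _ => ?_)
  rw [abs_mul, abs_mul]
  have := mul_le_mul (ha i) (hb j) (abs_nonneg _) zero_le_one
  nlinarith [abs_nonneg (A i j)]

/-- The sign attached to a Boolean. -/
def sg (b : Bool) : ℝ := if b then 1 else -1

lemma abs_sg (b : Bool) : |sg b| = 1 := by cases b <;> simp [sg]

lemma sg_decide (x : ℝ) : sg (decide (0 ≤ x)) * x = |x| := by
  by_cases h : 0 ≤ x
  · simp [sg, h, abs_of_nonneg h]
  · simp [sg, h, abs_of_neg (not_le.1 h)]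

/-- A bilinear form on the cube takes its extreme values at sign vectors. -/
lemma exists_signs_of_not_cutLe {ι : Type*} [Fintype ι] {A : ι → ι → ℝ} {ε : ℝ}
    (h : ¬ CutLe A ε) : ∃ α β : ι → Bool,
    ε * (Fintype.card ι : ℝ) ^ 2 < |∑ i, ∑ j, sg (α i) * sg (β j) * A i j| := by
  unfold CutLe at h
  push Not at h
  obtain ⟨a, b, ha, hb, hlt⟩ := h
  let α : ι → Bool := fun i => decide (0 ≤ ∑ j, b j * A i j)
  let β : ι → Bool := fun j => decide (0 ≤ ∑ i, sg (α i) * A i j)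
  refine ⟨α, β, hlt.trans_le ?_⟩
  have h1 : |∑ i, ∑ j, a i * b j * A i j| ≤ ∑ i, ∑ j, sg (α i) * b j * A i j := by
    refine (Finset.abs_sum_le_sum_abs _ _).trans (Finset.sum_le_sum fun i _ => ?_)
    have e1 : ∑ j, a i * b j * A i j = a i * ∑ j, b j * A i j := by
      simp only [Finset.mul_sum, mul_assoc]
    have e2 : ∑ j, sg (α i) * b j * A i j = |∑ j, b j * A i j| := by
      rw [← sg_decide]; simp only [Finset.mul_sum, mul_assoc, α]
    rw [e1, e2, abs_mul]
    exact mul_le_of_le_one_left (abs_nonneg _) (ha i)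
  have h2 : ∑ i, ∑ j, sg (α i) * b j * A i j ≤ ∑ i, ∑ j, sg (α i) * sg (β j) * A i j := by
    rw [Finset.sum_comm, Finset.sum_comm (f := fun i j => sg (α i) * sg (β j) * A i j)]
    refine Finset.sum_le_sum fun j _ => ?_
    have e1 : ∑ i, sg (α i) * b j * A i j = b j * ∑ i, sg (α i) * A i j := by
      rw [Finset.mul_sum]; exact Finset.sum_congr rfl fun i _ => by ring
    have e2 : ∑ i, sg (α i) * sg (β j) * A i j = |∑ i, sg (α i) * A i j| := by
      rw [← sg_decide, Finset.mul_sum]; exact Finset.sum_congr rfl fun i _ => by ring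
    rw [e1, e2]
    calc _ ≤ |b j * ∑ i, sg (α i) * A i j| := le_abs_self _
      _ ≤ _ := by rw [abs_mul]; exact mul_le_of_le_one_left (abs_nonneg _) (hb j)
  exact (h1.trans h2).trans (le_abs_self _)

/-- Two applications of Cauchy–Schwarz bound the cut norm by the four-cycle density. -/
lemma cutLe_of_fourCycle {V : Type*} [Fintype V] {A : V → V → ℝ} {ε : ℝ} (hε : 0 ≤ ε)
    (h : ∑ i, ∑ i', ∑ j, ∑ j', A i j * A i' j * A i j' * A i' j'
      ≤ ε ^ 4 * (Fintype.card V : ℝ) ^ 4) : CutLe A ε := fun a b ha hb => by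
  set k : ℝ := (Fintype.card V : ℝ) with hk
  have hk0 : 0 ≤ k := Nat.cast_nonneg _
  set X := ∑ i, ∑ j, a i * b j * A i j with hX
  set Y := ∑ j, ∑ j', (b j * b j') * ∑ i, A i j * A i j' with hY
  have sq_le (c : ℝ) (hc : |c| ≤ 1) : c ^ 2 ≤ 1 := by
    rw [← sq_abs]; exact pow_le_one₀ (abs_nonneg _) hc
  have h1 : X ^ 2 ≤ k * Y := by
    have e : X = ∑ i, a i * ∑ j, b j * A i j := by
      simp only [hX, Finset.mul_sum, mul_assoc]
    have e2 : ∑ i, (∑ j, b j * A i j) ^ 2 = Y := by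
      simp only [sq, Finset.sum_mul_sum]
      rw [Finset.sum_comm, hY]
      refine Finset.sum_congr rfl fun j _ => ?_
      rw [Finset.sum_comm]
      refine Finset.sum_congr rfl fun j' _ => ?_
      rw [Finset.mul_sum]
      exact Finset.sum_congr rfl fun i _ => by ring
    have e3 : ∑ i, a i ^ 2 ≤ k := by
      calc _ ≤ ∑ i : V, (1 : ℝ) := Finset.sum_le_sum fun i _ => sq_le _ (ha i)
        _ = k := by simp [hk]
    rw [e]
    refine (Finset.sum_mul_sq_le_sq_mul_sq _ _ _).trans ?_
    rw [e2]
    refine mul_le_mul_of_nonneg_right e3 ?_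
    rw [← e2]; positivity
  have h2 : Y ^ 2 ≤ k ^ 2 * (ε ^ 4 * k ^ 4) := by
    have e : Y = ∑ q : V × V, (b q.1 * b q.2) * ∑ i, A i q.1 * A i q.2 := by
      rw [Fintype.sum_prod_type]
    have e2 : ∑ q : V × V, (∑ i, A i q.1 * A i q.2) ^ 2 =
        ∑ i, ∑ i', ∑ j, ∑ j', A i j * A i' j * A i j' * A i' j' := by
      rw [Fintype.sum_prod_type]
      simp only [sq, Finset.sum_mul_sum]
      have c1 : ∀ j : V, ∑ j' : V, ∑ i : V, ∑ i' : V, A i j * A i j' * (A i' j * A i' j') =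
          ∑ i : V, ∑ i' : V, ∑ j' : V, A i j * A i j' * (A i' j * A i' j') := fun j => by
        rw [Finset.sum_comm]
        exact Finset.sum_congr rfl fun i _ => Finset.sum_comm
      simp only [c1]
      rw [Finset.sum_comm]
      refine Finset.sum_congr rfl fun i _ => ?_
      rw [Finset.sum_comm]
      refine Finset.sum_congr rfl fun i' _ => Finset.sum_congr rfl fun j _ =>
        Finset.sum_congr rfl fun j' _ => by ring
    have e3 : ∑ q : V × V, (b q.1 * b q.2) ^ 2 ≤ k ^ 2 := by
      calc _ ≤ ∑ q : V × V, (1 : ℝ) := Finset.sum_le_sum fun q _ => by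
            rw [mul_pow]
            exact mul_le_one₀ (sq_le _ (hb _)) (sq_nonneg _) (sq_le _ (hb _))
        _ = k ^ 2 := by simp [hk, sq]
    rw [e]
    refine (Finset.sum_mul_sq_le_sq_mul_sq _ _ _).trans ?_
    rw [e2]
    exact mul_le_mul e3 h (by rw [← e2]; positivity) (by positivity)
  have h3 : X ^ 4 ≤ (ε * k ^ 2) ^ 4 := by
    calc X ^ 4 = (X ^ 2) ^ 2 := by ring
      _ ≤ (k * Y) ^ 2 := pow_le_pow_left₀ (sq_nonneg _) h1 2
      _ = k ^ 2 * Y ^ 2 := by ring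
      _ ≤ k ^ 2 * (k ^ 2 * (ε ^ 4 * k ^ 4)) := by gcongr
      _ = _ := by ring
  have h4 : |X| ^ 4 ≤ (ε * k ^ 2) ^ 4 := by
    rwa [Even.pow_abs (by decide)]
  exact le_of_pow_le_pow_left₀ (by norm_num) (by positivity) h4

/-- Reverse estimate: a small cut norm forces a small four-cycle sum. -/
lemma CutLe.fourCycle_le {ι : Type*} [Fintype ι] {f : ι → ι → ℝ} {ε : ℝ} (h : CutLe f ε)
    (hf : ∀ i j, |f i j| ≤ 1) :
    ∑ a, ∑ a', ∑ b, ∑ b', f a b * f a' b * f a b' * f a' b'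
      ≤ ε * (Fintype.card ι : ℝ) ^ 4 := by
  have key : ∀ a' b', ∑ a, ∑ b, f a b * f a' b * f a b' * f a' b'
      ≤ ε * (Fintype.card ι : ℝ) ^ 2 := fun a' b' => by
    refine (le_abs_self _).trans ?_
    refine le_trans (le_of_eq ?_) (h (fun a => f a b' * f a' b') (fun b => f a' b) ?_ ?_)
    · congr 1
      exact Finset.sum_congr rfl fun i _ => Finset.sum_congr rfl fun j _ => by ring
    · intro i
      rw [abs_mul]
      exact mul_le_one₀ (hf _ _) (abs_nonneg _) (hf _ _)
    · intro i; exact hf _ _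
  have e : ∑ a, ∑ a', ∑ b, ∑ b', f a b * f a' b * f a b' * f a' b' =
      ∑ a', ∑ b', ∑ a, ∑ b, f a b * f a' b * f a b' * f a' b' := by
    rw [Finset.sum_comm]
    refine Finset.sum_congr rfl fun a' _ => ?_
    rw [Finset.sum_comm (t := Finset.univ)]
    rw [Finset.sum_comm]
    rw [Finset.sum_comm (f := fun b' a => ∑ b, f a b * f a' b * f a b' * f a' b')]
    exact Finset.sum_congr rfl fun a _ => Finset.sum_comm
  rw [e]
  calc _ ≤ ∑ _a' : ι, ∑ _b' : ι, ε * (Fintype.card ι : ℝ) ^ 2 :=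
        Finset.sum_le_sum fun a' _ => Finset.sum_le_sum fun b' _ => key a' b'
    _ = _ := by simp; ring

/-! ### Weak regularity -/

/-- One step of the energy decrement. The types of the parts record the colour and, for every
round, the signs of the two test vectors used in it. Truncating to `[0,1]` after each correction
does not increase the `L²` distance to `w` and keeps the approximant bounded. -/
lemma regularity_aux {S ι : Type*} [Fintype ι] (w : ι → ι → ℝ)
    (hw0 : ∀ i j, 0 ≤ w i j) (hw1 : ∀ i j, w i j ≤ 1) (c : ι → S) {ε : ℝ} (hε : 0 < ε)
    (r : ℕ) :
    ∃ (p : ι → S × (Fin r → Bool × Bool))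
      (u : S × (Fin r → Bool × Bool) → S × (Fin r → Bool × Bool) → ℝ),
      (∀ q q', 0 ≤ u q q' ∧ u q q' ≤ 1) ∧ (∀ i, (p i).1 = c i) ∧
      (CutLe (fun i j => w i j - u (p i) (p j)) ε ∨
        ∑ i, ∑ j, (w i j - u (p i) (p j)) ^ 2
          ≤ (1 - r * ε ^ 2) * (Fintype.card ι : ℝ) ^ 2) := by
  induction r with
  | zero =>
    refine ⟨fun i => (c i, Fin.elim0), fun _ _ => 0, by simp, by simp, Or.inr ?_⟩
    calc ∑ i, ∑ j, (w i j - 0) ^ 2 ≤ ∑ _i : ι, ∑ _j : ι, (1 : ℝ) := by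
          refine Finset.sum_le_sum fun i _ => Finset.sum_le_sum fun j _ => ?_
          rw [sub_zero]; exact pow_le_one₀ (hw0 i j) (hw1 i j)
      _ = _ := by simp [sq]
  | succ r ih =>
    obtain ⟨p, u, hu, hp, hor⟩ := ih
    by_cases hcut : CutLe (fun i j => w i j - u (p i) (p j)) ε
    · refine ⟨fun i => ((p i).1, Fin.snoc (p i).2 (true, true)),
        fun q q' => u (q.1, Fin.init q.2) (q'.1, Fin.init q'.2), fun _ _ => hu _ _, hp,
        Or.inl ?_⟩
      simpa using hcut
    · have hE := hor.resolve_left hcut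
      obtain ⟨α, β, hlt⟩ := exists_signs_of_not_cutLe hcut
      set D := ∑ i, ∑ j, sg (α i) * sg (β j) * (w i j - u (p i) (p j)) with hD
      set n : ℝ := (Fintype.card ι : ℝ) with hn
      let t : ℝ := ε * sg (decide (0 ≤ D))
      refine ⟨fun i => ((p i).1, Fin.snoc (p i).2 (α i, β i)),
        fun q q' => max 0 (min 1 (u (q.1, Fin.init q.2) (q'.1, Fin.init q'.2) +
          t * (sg (q.2 (Fin.last r)).1 * sg (q'.2 (Fin.last r)).2))),
        fun q q' => ⟨le_max_left _ _, max_le zero_le_one (min_le_left _ _)⟩, hp, Or.inr ?_⟩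
      have clamp : ∀ x y : ℝ, 0 ≤ x → x ≤ 1 → (x - max 0 (min 1 y)) ^ 2 ≤ (x - y) ^ 2 := by
        intro x y h0 h1
        rcases le_total 1 y with hy | hy
        · rw [min_eq_left hy, max_eq_right zero_le_one]; nlinarith
        · rw [min_eq_right hy]
          rcases le_total 0 y with hy0 | hy0
          · rw [max_eq_right hy0]
          · rw [max_eq_left hy0]; nlinarith
      calc _ ≤ ∑ i, ∑ j, (w i j - (u (p i) (p j) + t * (sg (α i) * sg (β j)))) ^ 2 := by
            refine Finset.sum_le_sum fun i _ => Finset.sum_le_sum fun j _ => ?_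
            simpa using clamp (w i j) (u (p i) (p j) + t * (sg (α i) * sg (β j)))
              (hw0 i j) (hw1 i j)
        _ = ∑ i, ∑ j, ((w i j - u (p i) (p j)) ^ 2
              - 2 * t * (sg (α i) * sg (β j) * (w i j - u (p i) (p j))) + t ^ 2) := by
            refine Finset.sum_congr rfl fun i _ => Finset.sum_congr rfl fun j _ => ?_
            have h1 : sg (α i) ^ 2 = 1 := by rw [← sq_abs, abs_sg]; norm_num
            have h2 : sg (β j) ^ 2 = 1 := by rw [← sq_abs, abs_sg]; norm_num
            linear_combination t ^ 2 * (sg (β j) ^ 2 * h1 + h2)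
        _ = (∑ i, ∑ j, (w i j - u (p i) (p j)) ^ 2) - 2 * t * D + t ^ 2 * n ^ 2 := by
            simp only [Finset.sum_add_distrib, Finset.sum_sub_distrib, ← Finset.mul_sum, ← hD]
            simp [hn]; ring
        _ ≤ _ := by
            have h1 : t * D = ε * |D| := by simp only [t]; rw [mul_assoc, sg_decide]
            have h2 : t ^ 2 = ε ^ 2 := by
              simp only [t]; rw [mul_pow, ← sq_abs (sg _), abs_sg]; norm_num
            rw [h2, mul_assoc, h1]
            push_cast
            nlinarith

/-- Weak regularity lemma, with a number of parts that depends on `ε` only. -/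
lemma regularity (S : Type*) {ε : ℝ} (hε : 0 < ε) : ∃ r : ℕ,
    ∀ (ι : Type) [Fintype ι] [Nonempty ι] (w : ι → ι → ℝ)
    (_ : ∀ i j, 0 ≤ w i j) (_ : ∀ i j, w i j ≤ 1) (c : ι → S),
    ∃ (p : ι → S × (Fin r → Bool × Bool))
      (u : S × (Fin r → Bool × Bool) → S × (Fin r → Bool × Bool) → ℝ),
      (∀ q q', 0 ≤ u q q' ∧ u q q' ≤ 1) ∧ (∀ i, (p i).1 = c i) ∧
      CutLe (fun i j => w i j - u (p i) (p j)) ε := by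
  obtain ⟨r, hr⟩ := exists_nat_gt (1 / ε ^ 2)
  refine ⟨r, fun ι _ _ w h0 h1 c => ?_⟩
  obtain ⟨p, u, hu, hp, hor⟩ := regularity_aux w h0 h1 c hε r
  refine ⟨p, u, hu, hp, hor.resolve_right fun hE => ?_⟩
  have h2 : 1 < r * ε ^ 2 := by rwa [div_lt_iff₀ (by positivity)] at hr
  have h3 : (0 : ℝ) ≤ ∑ i, ∑ j, (w i j - u (p i) (p j)) ^ 2 := by positivity
  have h4 : (0 : ℝ) < (Fintype.card ι : ℝ) ^ 2 := by
    have : 0 < Fintype.card ι := Fintype.card_pos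
    positivity
  nlinarith

/-! ### Matching two labellings by a permutation -/

/-- Two labellings of a finite set agree, after a permutation, outside a set no larger than the
total difference of their label counts. -/
lemma exists_perm_matching {ι Q : Type*} [Fintype ι] [DecidableEq ι] [Fintype Q] [DecidableEq Q]
    (p q : ι → Q) : ∃ π : Equiv.Perm ι,
    ((Finset.univ.filter fun i => p (π i) ≠ q i).card : ℝ) ≤
      ∑ s, |((Finset.univ.filter fun i => p i = s).card : ℝ)
        - ((Finset.univ.filter fun i => q i = s).card : ℝ)| := by
  classical
  set P : Q → Finset ι := fun s => Finset.univ.filter fun i => p i = s with hP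
  set R : Q → Finset ι := fun s => Finset.univ.filter fun i => q i = s with hR
  have hA : ∀ s, ∃ A ⊆ R s, A.card = min (P s).card (R s).card := fun s =>
    Finset.exists_subset_card_eq (min_le_right _ _)
  choose A hAR hAc using hA
  have hg : ∀ s, ∃ g : ι → ι, Set.MapsTo g (A s) (P s) ∧ Set.InjOn g (A s) := fun s => by
    have hle : (A s).card ≤ (P s).card := by rw [hAc]; exact min_le_left _ _
    obtain ⟨B, hB, hBc⟩ := Finset.exists_subset_card_eq hle
    let e := Finset.equivOfCardEq hBc.symm
    refine ⟨fun i => if h : i ∈ A s then (e ⟨i, h⟩ : ι) else i, ?_, ?_⟩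
    · intro i hi
      have hi' : i ∈ A s := hi
      simp only [hi', dif_pos]
      exact hB (e ⟨i, hi'⟩).2
    · intro i hi j hj hij
      have hi' : i ∈ A s := hi
      have hj' : j ∈ A s := hj
      simp only [hi', hj', dif_pos] at hij
      simpa using e.injective (Subtype.ext hij)
  choose g hgm hgi using hg
  let Z : Finset ι := Finset.univ.filter fun i => i ∈ A (q i)
  have hpg : ∀ i ∈ Z, p (g (q i) i) = q i := fun i hi => by
    have := hgm (q i) (Finset.mem_coe.2 (Finset.mem_filter.1 hi).2)
    exact (Finset.mem_filter.1 (Finset.mem_coe.1 this)).2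
  have hinj : Set.InjOn (fun i => g (q i) i) Z := by
    intro i hi j hj hij
    have h1 : q i = q j := by
      rw [← hpg i hi, ← hpg j hj]; exact congrArg p hij
    have hi' := (Finset.mem_filter.1 (Finset.mem_coe.1 hi)).2
    have hj' := (Finset.mem_filter.1 (Finset.mem_coe.1 hj)).2
    simp only [h1] at hij hi'
    exact hgi _ hi' hj' hij
  obtain ⟨π', hπ'⟩ := Finset.exists_equiv_extend_of_card_eq
    (t := (Finset.univ : Finset ι)) (Finset.card_univ.symm) (Finset.subset_univ _) hinj
  let π : Equiv.Perm ι := π'.trans (Equiv.subtypeUnivEquiv (fun x => Finset.mem_univ x))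
  refine ⟨π, ?_⟩
  have hsub : (Finset.univ.filter fun i => p (π i) ≠ q i) ⊆
      Finset.univ.biUnion fun s => R s \ A s := by
    intro i hi
    simp only [Finset.mem_biUnion, Finset.mem_univ, true_and, Finset.mem_sdiff]
    refine ⟨q i, by simp [hR], fun hiA => (Finset.mem_filter.1 hi).2 ?_⟩
    have hiZ : i ∈ Z := by simp [Z, hiA]
    have : π i = g (q i) i := hπ' i hiZ
    rw [this]; exact hpg i hiZ
  have h1 := (Finset.card_le_card hsub).trans Finset.card_biUnion_le
  calc _ ≤ ((∑ s, (R s \ A s).card : ℕ) : ℝ) := by exact_mod_cast h1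
    _ = ∑ s, ((R s \ A s).card : ℝ) := by push_cast; rfl
    _ ≤ _ := Finset.sum_le_sum fun s _ => by
      rw [Finset.cast_card_sdiff (hAR s), hAc]
      push_cast
      rcases le_total ((P s).card : ℝ) (R s).card with h | h
      · rw [min_eq_left h, abs_sub_comm]; exact le_abs_self _
      · rw [min_eq_right h, sub_self]; positivity

/-! ### Finite weighted coloured graphs and their samples -/

/-- A vertex-coloured graph on `ι` with symmetric edge weights in `[0,1]` (loops allowed). -/
structure WGraph (ι S : Type*) where
  w : ι → ι → ℝ
  symm : ∀ i j, w i j = w j i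
  nonneg : ∀ i j, 0 ≤ w i j
  le_one : ∀ i j, w i j ≤ 1
  c : ι → S

/-- The non-loop pairs of elements of `V`. -/
def allEdges (V : Type*) [Fintype V] [DecidableEq V] : Finset (Sym2 V) :=
  Finset.univ.filter fun e => ¬ e.IsDiag

namespace WGraph

variable {ι S V : Type*}

/-- The weight of the pair `e` of sample indices under the sample `x`. -/
def edge (G : WGraph ι S) (x : V → ι) : Sym2 V → ℝ :=
  Sym2.lift ⟨fun u v => G.w (x u) (x v), fun _ _ => G.symm _ _⟩

/-- The conditional probability, given the sample points `x`, that the sampled simple graph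
has edge set `T`. -/
def prob [Fintype V] [DecidableEq V] (G : WGraph ι S) (x : V → ι) (T : Finset (Sym2 V)) : ℝ :=
  (∏ e ∈ T, G.edge x e) * ∏ e ∈ allEdges V \ T, (1 - G.edge x e)

/-- The coloured homomorphism density of the graph with edge set `T` and colouring `cT`. -/
def hom [Fintype ι] [Fintype V] [DecidableEq V] [DecidableEq S] (G : WGraph ι S)
    (T : Finset (Sym2 V)) (cT : V → S) : ℝ :=
  𝔼 x : V → ι, (∏ e ∈ T, G.edge x e) * ∏ v, (if G.c (x v) = cT v then (1 : ℝ) else 0)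

/-- The probability that the random sample has edge set `T` and colouring `cT`. -/
def ind [Fintype ι] [Fintype V] [DecidableEq V] [DecidableEq S] (G : WGraph ι S)
    (T : Finset (Sym2 V)) (cT : V → S) : ℝ :=
  𝔼 x : V → ι, G.prob x T * ∏ v, (if G.c (x v) = cT v then (1 : ℝ) else 0)

lemma edge_nonneg (G : WGraph ι S) (x : V → ι) (e : Sym2 V) : 0 ≤ G.edge x e := by
  induction e with | _ a b => exact G.nonneg _ _

lemma edge_le_one (G : WGraph ι S) (x : V → ι) (e : Sym2 V) : G.edge x e ≤ 1 := by
  induction e with | _ a b => exact G.le_one _ _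

lemma prob_nonneg [Fintype V] [DecidableEq V] (G : WGraph ι S) (x : V → ι)
    (T : Finset (Sym2 V)) : 0 ≤ G.prob x T :=
  mul_nonneg (Finset.prod_nonneg fun _ _ => G.edge_nonneg _ _)
    (Finset.prod_nonneg fun _ _ => sub_nonneg.2 (G.edge_le_one _ _))

/-- Given the sample points, the edges are independent: the expectation of a product of
functions of different edges is the product of the expectations. -/
lemma sum_prob_mul_prod [Fintype V] [DecidableEq V] (G : WGraph ι S) (x : V → ι)
    (F : Finset (Sym2 V)) (hF : F ⊆ allEdges V) (z : Sym2 V → ℝ) :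
    ∑ T ∈ (allEdges V).powerset, G.prob x T * ∏ e ∈ F, ((if e ∈ T then (1 : ℝ) else 0) - z e)
      = ∏ e ∈ F, (G.edge x e - z e) := by
  set y := G.edge x with hy
  set E := allEdges V with hE
  let f : Sym2 V → ℝ := fun e => y e * (if e ∈ F then 1 - z e else 1)
  let g : Sym2 V → ℝ := fun e => (1 - y e) * (if e ∈ F then - z e else 1)
  have h := Finset.prod_add f g E
  have hl : ∏ e ∈ E, (f e + g e) = ∏ e ∈ F, (y e - z e) := by
    rw [← Finset.prod_subset hF]
    · refine Finset.prod_congr rfl fun e he => ?_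
      simp only [f, g, he, if_true]; ring
    · intro e _ he
      simp only [f, g, he, if_false]; ring
  rw [← hl, h]
  refine Finset.sum_congr rfl fun T hT => ?_
  have hTE := Finset.mem_powerset.1 hT
  simp only [f, g, Finset.prod_mul_distrib, prob, ← hy, ← hE]
  have h2 : ∏ e ∈ F, ((if e ∈ T then (1 : ℝ) else 0) - z e) =
      (∏ e ∈ T, (if e ∈ F then 1 - z e else 1)) *
        ∏ e ∈ E \ T, (if e ∈ F then - z e else 1) := by
    rw [← Finset.prod_filter, ← Finset.prod_filter]
    have e1 : T.filter (· ∈ F) = F.filter (· ∈ T) := by ext; simp [and_comm]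
    have e2 : (E \ T).filter (· ∈ F) = F.filter (· ∉ T) := by
      ext e; simp only [Finset.mem_filter, Finset.mem_sdiff]
      exact ⟨fun h => ⟨h.2, h.1.2⟩, fun h => ⟨⟨hF h.1, h.2⟩, h.1⟩⟩
    rw [e1, e2, ← Finset.prod_filter_mul_prod_filter_not F (· ∈ T)]
    congr 1
    · exact Finset.prod_congr rfl fun e he => by simp [(Finset.mem_filter.1 he).2]
    · exact Finset.prod_congr rfl fun e he => by simp [(Finset.mem_filter.1 he).2]
  rw [h2]; ring

lemma sum_prob [Fintype V] [DecidableEq V] (G : WGraph ι S) (x : V → ι) :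
    ∑ T ∈ (allEdges V).powerset, G.prob x T = 1 := by
  simpa using G.sum_prob_mul_prod x ∅ (Finset.empty_subset _) (fun _ => 0)

lemma sum_prob_mul_four [Fintype V] [DecidableEq V] (G : WGraph ι S) (x : V → ι)
    {e₁ e₂ e₃ e₄ : Sym2 V} (h₁ : ¬ e₁.IsDiag) (h₂ : ¬ e₂.IsDiag) (h₃ : ¬ e₃.IsDiag)
    (h₄ : ¬ e₄.IsDiag) (h12 : e₁ ≠ e₂) (h13 : e₁ ≠ e₃) (h14 : e₁ ≠ e₄) (h23 : e₂ ≠ e₃)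
    (h24 : e₂ ≠ e₄) (h34 : e₃ ≠ e₄) (z₁ z₂ z₃ z₄ : ℝ) :
    ∑ T ∈ (allEdges V).powerset, G.prob x T *
      (((if e₁ ∈ T then (1 : ℝ) else 0) - z₁) * ((if e₂ ∈ T then (1 : ℝ) else 0) - z₂) *
       ((if e₃ ∈ T then (1 : ℝ) else 0) - z₃) * ((if e₄ ∈ T then (1 : ℝ) else 0) - z₄))
      = (G.edge x e₁ - z₁) * (G.edge x e₂ - z₂) * (G.edge x e₃ - z₃) * (G.edge x e₄ - z₄) := by
  let z : Sym2 V → ℝ := fun e =>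
    if e = e₁ then z₁ else if e = e₂ then z₂ else if e = e₃ then z₃ else z₄
  have h := G.sum_prob_mul_prod x {e₁, e₂, e₃, e₄} (by
    intro e he
    simp only [Finset.mem_insert, Finset.mem_singleton] at he
    simp only [allEdges, Finset.mem_filter, Finset.mem_univ, true_and]
    rcases he with rfl | rfl | rfl | rfl <;> assumption) z
  have n1 : e₁ ∉ ({e₂, e₃, e₄} : Finset (Sym2 V)) := by simp [h12, h13, h14]
  have n2 : e₂ ∉ ({e₃, e₄} : Finset (Sym2 V)) := by simp [h23, h24]
  have n3 : e₃ ∉ ({e₄} : Finset (Sym2 V)) := by simp [h34]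
  simp only [Finset.prod_insert n1, Finset.prod_insert n2, Finset.prod_insert n3,
    Finset.prod_singleton] at h
  have q1 : z e₁ = z₁ := by simp [z]
  have q2 : z e₂ = z₂ := by simp [z, h12.symm]
  have q3 : z e₃ = z₃ := by simp [z, h13.symm, h23.symm]
  have q4 : z e₄ = z₄ := by simp [z, h14.symm, h24.symm, h34.symm]
  rw [q1, q2, q3, q4] at h
  simp only [mul_assoc] at h ⊢
  exact h

/-- Inclusion–exclusion expresses the sampling distribution through homomorphism densities. -/
lemma ind_eq [Fintype ι] [Fintype V] [DecidableEq V] [DecidableEq S] (G : WGraph ι S)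
    (T : Finset (Sym2 V)) (cT : V → S) :
    G.ind T cT = ∑ R ∈ (allEdges V \ T).powerset, (-1) ^ R.card * G.hom (T ∪ R) cT := by
  simp only [ind, hom, Finset.mul_expect]
  rw [← Finset.expect_sum_comm]
  refine Finset.expect_congr rfl fun x _ => ?_
  have h : ∏ e ∈ allEdges V \ T, (1 - G.edge x e) =
      ∑ R ∈ (allEdges V \ T).powerset, (-1) ^ R.card * ∏ e ∈ R, G.edge x e := by
    have := Finset.prod_add (fun e => - G.edge x e) (fun _ => 1) (allEdges V \ T)
    simp only [Finset.prod_const_one, mul_one, Finset.prod_neg] at this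
    rw [← this]
    exact Finset.prod_congr rfl fun e _ => by ring
  rw [prob, h, Finset.mul_sum, Finset.sum_mul]
  refine Finset.sum_congr rfl fun R hR => ?_
  have hd : Disjoint T R := by
    have := Finset.mem_powerset.1 hR
    exact Finset.disjoint_left.2 fun e h1 h2 => (Finset.mem_sdiff.1 (this h2)).2 h1
  rw [Finset.prod_union hd]; ring

lemma ind_nonneg [Fintype ι] [Fintype V] [DecidableEq V] [DecidableEq S] (G : WGraph ι S)
    (T : Finset (Sym2 V)) (cT : V → S) : 0 ≤ G.ind T cT :=
  Finset.expect_nonneg fun x _ => mul_nonneg (G.prob_nonneg _ _)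
    (Finset.prod_nonneg fun v _ => by split_ifs <;> simp)

/-- Summing over all colourings removes the colour constraint. -/
lemma sum_color [Fintype V] [DecidableEq V] [Fintype S] [DecidableEq S] (G : WGraph ι S)
    (x : V → ι) : ∑ cT : V → S, ∏ v, (if G.c (x v) = cT v then (1 : ℝ) else 0) = 1 := by
  have : ∀ cT : V → S, (∏ v, (if G.c (x v) = cT v then (1 : ℝ) else 0)) =
      if (fun v => G.c (x v)) = cT then 1 else 0 := fun cT => by
    rw [Fintype.prod_ite_zero]; simp [funext_iff]
  simp [this]

lemma sum_ind [Fintype ι] [Nonempty ι] [Fintype V] [DecidableEq V] [Fintype S] [DecidableEq S]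
    (G : WGraph ι S) :
    ∑ T ∈ (allEdges V).powerset, ∑ cT : V → S, G.ind T cT = 1 := by
  simp only [ind]
  simp only [← Finset.expect_sum_comm, ← Finset.mul_sum, sum_color, mul_one, sum_prob]
  exact Fintype.expect_const 1

end WGraph

/-- A coordinate of a uniformly random function may be resampled. -/
lemma expect_update {V ι : Type*} [Fintype V] [DecidableEq V] [Fintype ι] [Nonempty ι]
    (v : V) (F : (V → ι) → ℝ) :
    𝔼 x : V → ι, 𝔼 a : ι, F (Function.update x v a) = 𝔼 x, F x := by
  let e : (V → ι) × ι ≃ (V → ι) × ι :=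
    { toFun := fun q => (Function.update q.1 v q.2, q.1 v)
      invFun := fun q => (Function.update q.1 v q.2, q.1 v)
      left_inv := fun q => by simp
      right_inv := fun q => by simp }
  have h1 := Finset.expect_product' (Finset.univ : Finset (V → ι)) (Finset.univ : Finset ι)
    (fun x a => F (Function.update x v a))
  have h2 := Finset.expect_product' (Finset.univ : Finset (V → ι)) (Finset.univ : Finset ι)
    (fun x _ => F x)
  have h3 : 𝔼 x : V → ι, 𝔼 _a : ι, F x = 𝔼 x, F x :=
    Finset.expect_congr rfl fun x _ => Fintype.expect_const _
  rw [← h3, ← h1, ← h2]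
  exact Fintype.expect_equiv e _ _ fun q => rfl

/-- The second moment of a sum of independent centred variables bounded by one. -/
lemma expect_sq_sum_le {V ι : Type*} [Fintype V] [DecidableEq V] [Fintype ι] [Nonempty ι]
    (g : ι → ℝ) (hg : ∀ a, |g a| ≤ 1) (h0 : 𝔼 a, g a = 0) :
    𝔼 x : V → ι, (∑ v, g (x v)) ^ 2 ≤ Fintype.card V := by
  have h1 : ∀ x : V → ι, (∑ v, g (x v)) ^ 2 = ∑ v, ∑ v', g (x v) * g (x v') := fun x => by
    rw [sq, Finset.sum_mul_sum]
  simp only [h1, Finset.expect_sum_comm]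
  have h2 : ∀ v v' : V, 𝔼 x : V → ι, g (x v) * g (x v') ≤ if v = v' then 1 else 0 := by
    intro v v'
    split_ifs with h
    · calc _ ≤ 𝔼 x : V → ι, (1 : ℝ) := Finset.expect_le_expect fun x _ => by
            refine (le_abs_self _).trans ?_
            rw [abs_mul]; exact mul_le_one₀ (hg _) (abs_nonneg _) (hg _)
        _ = 1 := Fintype.expect_const _
    · rw [← expect_update v]
      refine le_of_eq (Finset.expect_eq_zero fun x _ => ?_)
      simp only [Function.update_self, Function.update_of_ne (Ne.symm h)]
      rw [← Finset.expect_mul, h0, zero_mul]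
  calc _ ≤ ∑ v : V, ∑ v' : V, (if v = v' then (1 : ℝ) else 0) :=
        Finset.sum_le_sum fun v _ => Finset.sum_le_sum fun v' _ => h2 v v'
    _ = _ := by simp

/-- The matrix of differences between the simple graph `T` and the step function `u ∘ p` read
off at the sample points `x`. -/
def sampleMat {ι V Q : Type*} [DecidableEq V] (p : ι → Q) (u : Q → Q → ℝ) (x : V → ι)
    (T : Finset (Sym2 V)) (i j : V) : ℝ :=
  (if s(i, j) ∈ T then (1 : ℝ) else 0) - u (p (x i)) (p (x j))

/-- The four-cycle sum of `sampleMat`. -/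
def sampleC4 {ι V Q : Type*} [Fintype V] [DecidableEq V] (p : ι → Q) (u : Q → Q → ℝ) (x : V → ι)
    (T : Finset (Sym2 V)) : ℝ :=
  ∑ i, ∑ i', ∑ j, ∑ j', sampleMat p u x T i j * sampleMat p u x T i' j *
    sampleMat p u x T i j' * sampleMat p u x T i' j'

lemma abs_sampleMat_le {ι V Q : Type*} [DecidableEq V] (p : ι → Q) (u : Q → Q → ℝ)
    (hu : ∀ q q', 0 ≤ u q q' ∧ u q q' ≤ 1) (x : V → ι) (T : Finset (Sym2 V)) (i j : V) :
    |sampleMat p u x T i j| ≤ 1 := by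
  have := hu (p (x i)) (p (x j))
  unfold sampleMat
  rw [abs_le]
  split_ifs <;> constructor <;> linarith

/-- The expected four-cycle sum of the sampled difference matrix is the four-cycle density of
`w - u ∘ p`, up to the contribution of degenerate four-tuples. -/
lemma expect_sampleC4_le {ι S V Q : Type*} [Fintype ι] [Nonempty ι] [Fintype V] [DecidableEq V]
    (G : WGraph ι S) (p : ι → Q) (u : Q → Q → ℝ)
    (hu : ∀ q q', 0 ≤ u q q' ∧ u q q' ≤ 1) {ε : ℝ} (hε : 0 ≤ ε)
    (hcut : CutLe (fun i j => G.w i j - u (p i) (p j)) ε) :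
    𝔼 x : V → ι, ∑ T ∈ (allEdges V).powerset, G.prob x T * sampleC4 p u x T
      ≤ ε * (Fintype.card V : ℝ) ^ 4 + 6 * (Fintype.card V : ℝ) ^ 3 := by
  set k : ℝ := (Fintype.card V : ℝ) with hk
  let d : V → V → ℝ := fun i j => if i = j then 1 else 0
  have hd0 : ∀ i j, 0 ≤ d i j := fun i j => by simp only [d]; split_ifs <;> simp
  have key : ∀ i i' j j' : V,
      𝔼 x : V → ι, ∑ T ∈ (allEdges V).powerset, G.prob x T * (sampleMat p u x T i j *
        sampleMat p u x T i' j * sampleMat p u x T i j' * sampleMat p u x T i' j')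
      ≤ ε + (d i i' + d i j + d i j' + d i' j + d i' j' + d j j') := by
    intro i i' j j'
    by_cases hdist : i ≠ i' ∧ i ≠ j ∧ i ≠ j' ∧ i' ≠ j ∧ i' ≠ j' ∧ j ≠ j'
    · obtain ⟨h1, h2, h3, h4, h5, h6⟩ := hdist
      have hs : ε ≤ ε + (d i i' + d i j + d i j' + d i' j + d i' j' + d j j') := by
        have := hd0 i i'; have := hd0 i j; have := hd0 i j'; have := hd0 i' j
        have := hd0 i' j'; have := hd0 j j'
        linarith
      refine le_trans ?_ hs
      let f : ι → ι → ℝ := fun a b => G.w a b - u (p a) (p b)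
      have e1 : ∀ x : V → ι, ∑ T ∈ (allEdges V).powerset, G.prob x T *
          (sampleMat p u x T i j * sampleMat p u x T i' j * sampleMat p u x T i j' *
            sampleMat p u x T i' j') =
          f (x i) (x j) * f (x i') (x j) * f (x i) (x j') * f (x i') (x j') := fun x => by
        simp only [sampleMat]
        rw [G.sum_prob_mul_four x]
        · rfl
        all_goals simp only [Sym2.mk_isDiag_iff, ne_eq, Sym2.eq_iff]
        all_goals tauto
      simp only [e1]
      rw [← expect_update i]
      simp only [Function.update_self, Function.update_of_ne h1.symm,
        Function.update_of_ne h2.symm, Function.update_of_ne h3.symm]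
      rw [← expect_update i']
      simp only [Function.update_self,
        Function.update_of_ne h4.symm, Function.update_of_ne h5.symm]
      rw [← expect_update j]
      simp only [Function.update_self, Function.update_of_ne h6.symm]
      rw [← expect_update j']
      simp only [Function.update_self]
      rw [Fintype.expect_const]
      have hc4 := hcut.fourCycle_le (fun a b => by
        have := hu (p a) (p b)
        have := G.nonneg a b
        have := G.le_one a b
        rw [abs_le]; constructor <;> linarith)
      have hn : (0 : ℝ) < Fintype.card ι := by exact_mod_cast Fintype.card_pos
      simp only [Fintype.expect_eq_sum_div_card, ← Finset.sum_div, div_div]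
      rw [div_le_iff₀ (by positivity)]
      refine le_trans (le_of_eq ?_) (hc4.trans (le_of_eq (by ring)))
      rw [Finset.sum_comm (f := fun j' j => ∑ i', ∑ i, f i j * f i' j * f i j' * f i' j')]
      have : ∀ j j' : ι, ∑ i', ∑ i, f i j * f i' j * f i j' * f i' j' =
        ∑ i, ∑ i', f i j * f i' j * f i j' * f i' j' := fun j j' => Finset.sum_comm
      simp only [this]
      have : ∀ j : ι, ∑ j', ∑ i, ∑ i', f i j * f i' j * f i j' * f i' j' =
        ∑ i, ∑ i', ∑ j', f i j * f i' j * f i j' * f i' j' := fun j => by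
        rw [Finset.sum_comm]
        exact Finset.sum_congr rfl fun _ _ => Finset.sum_comm
      simp only [this]
      rw [Finset.sum_comm]
      exact Finset.sum_congr rfl fun _ _ => Finset.sum_comm
    · have hs : 1 ≤ ε + (d i i' + d i j + d i j' + d i' j + d i' j' + d j j') := by
        have q1 := hd0 i i'; have q2 := hd0 i j; have q3 := hd0 i j'; have q4 := hd0 i' j
        have q5 := hd0 i' j'; have q6 := hd0 j j'
        have hd1 : ∀ a b : V, a = b → d a b = 1 := fun a b h => by simp [d, h]
        by_contra hlt
        push Not at hlt
        refine hdist ⟨?_, ?_, ?_, ?_, ?_, ?_⟩ <;> intro h <;> have := hd1 _ _ h <;> linarith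
      refine le_trans ?_ hs
      calc _ ≤ 𝔼 x : V → ι, (1 : ℝ) := Finset.expect_le_expect fun x _ => by
            rw [← G.sum_prob x]
            refine Finset.sum_le_sum fun T _ => mul_le_of_le_one_right (G.prob_nonneg _ _) ?_
            refine (le_abs_self _).trans ?_
            have hb := abs_sampleMat_le p u hu x T
            simp only [abs_mul]
            exact mul_le_one₀ (mul_le_one₀ (mul_le_one₀ (hb _ _) (abs_nonneg _) (hb _ _))
              (abs_nonneg _) (hb _ _)) (abs_nonneg _) (hb _ _)
        _ = 1 := Fintype.expect_const _
  have e : 𝔼 x : V → ι, ∑ T ∈ (allEdges V).powerset, G.prob x T * sampleC4 p u x T =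
      ∑ i, ∑ i', ∑ j, ∑ j', 𝔼 x : V → ι, ∑ T ∈ (allEdges V).powerset, G.prob x T *
        (sampleMat p u x T i j * sampleMat p u x T i' j * sampleMat p u x T i j' *
          sampleMat p u x T i' j') := by
    simp only [← Finset.expect_sum_comm]
    refine Finset.expect_congr rfl fun x _ => ?_
    simp only [sampleC4, Finset.mul_sum]
    rw [Finset.sum_comm]
    refine Finset.sum_congr rfl fun _ _ => ?_
    rw [Finset.sum_comm]
    refine Finset.sum_congr rfl fun _ _ => ?_
    rw [Finset.sum_comm]
    refine Finset.sum_congr rfl fun _ _ => ?_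
    rw [Finset.sum_comm]
  rw [e]
  calc _ ≤ ∑ i, ∑ i', ∑ j, ∑ j',
        (ε + (d i i' + d i j + d i j' + d i' j + d i' j' + d j j')) :=
        Finset.sum_le_sum fun i _ => Finset.sum_le_sum fun i' _ => Finset.sum_le_sum fun j _ =>
          Finset.sum_le_sum fun j' _ => key i i' j j'
    _ = _ := by
      simp only [Finset.sum_add_distrib, d, Finset.sum_const, Finset.sum_ite_eq,
        Finset.mem_univ, if_true, Finset.card_univ, nsmul_eq_mul, ← Finset.mul_sum, ← hk]
      ring

/-! ### Samples are close to the graph they are drawn from -/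

lemma sampleC4_nonneg {ι V Q : Type*} [Fintype V] [DecidableEq V] (p : ι → Q) (u : Q → Q → ℝ)
    (x : V → ι) (T : Finset (Sym2 V)) : 0 ≤ sampleC4 p u x T := by
  have : sampleC4 p u x T =
      ∑ i, ∑ i', (∑ j, sampleMat p u x T i j * sampleMat p u x T i' j) ^ 2 := by
    simp only [sampleC4, sq, Finset.sum_mul_sum]
    refine Finset.sum_congr rfl fun _ _ => Finset.sum_congr rfl fun _ _ =>
      Finset.sum_congr rfl fun _ _ => Finset.sum_congr rfl fun _ _ => by ring
  rw [this]; positivity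

/-- Blowing up every vertex into `m` copies does not change the cut norm. -/
lemma CutLe.blowup {V ι : Type*} [Fintype V] [Fintype ι] {m : ℕ} (hm : 0 < m)
    (e : ι ≃ V × Fin m) {A : V → V → ℝ} {ε : ℝ} (h : CutLe A ε) :
    CutLe (fun i j => A (e i).1 (e j).1) ε := fun a b ha hb => by
  have hm' : (0 : ℝ) < m := by exact_mod_cast hm
  let α : (ι → ℝ) → V → ℝ := fun a v => (∑ l : Fin m, a (e.symm (v, l))) / m
  have hα : ∀ a : ι → ℝ, (∀ i, |a i| ≤ 1) → ∀ v, |α a v| ≤ 1 := fun a ha v => by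
    simp only [α]
    rw [abs_div, abs_of_pos hm', div_le_one hm']
    calc _ ≤ ∑ l : Fin m, |a (e.symm (v, l))| := Finset.abs_sum_le_sum_abs _ _
      _ ≤ ∑ l : Fin m, (1 : ℝ) := Finset.sum_le_sum fun l _ => ha _
      _ = m := by simp
  have h1 := h (α a) (α b) (hα a ha) (hα b hb)
  have hc : (Fintype.card ι : ℝ) = Fintype.card V * m := by
    rw [Fintype.card_congr e]; simp
  have h2 : ∑ i, ∑ j, a i * b j * A (e i).1 (e j).1 =
      (∑ v, ∑ v', α a v * α b v' * A v v') * m ^ 2 := by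
    rw [← Equiv.sum_comp e.symm, Fintype.sum_prod_type, Finset.sum_mul]
    refine Finset.sum_congr rfl fun v _ => ?_
    rw [Finset.sum_mul]
    have : ∀ l : Fin m, ∑ j, a (e.symm (v, l)) * b j * A (e (e.symm (v, l))).1 (e j).1 =
        ∑ v', a (e.symm (v, l)) * ((α b v' * m) * A v v') := fun l => by
      rw [← Equiv.sum_comp e.symm, Fintype.sum_prod_type]
      refine Finset.sum_congr rfl fun v' _ => ?_
      simp only [Equiv.apply_symm_apply, α]
      rw [div_mul_cancel₀ _ hm'.ne', Finset.sum_mul, Finset.mul_sum]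
      exact Finset.sum_congr rfl fun l _ => by ring
    simp only [this]
    rw [Finset.sum_comm]
    refine Finset.sum_congr rfl fun v' _ => ?_
    rw [← Finset.sum_mul]
    have : ∑ l : Fin m, a (e.symm (v, l)) = α a v * m := by
      simp only [α]; rw [div_mul_cancel₀ _ hm'.ne']
    rw [this]; ring
  rw [h2, abs_mul, abs_of_pos (by positivity : (0 : ℝ) < (m : ℝ) ^ 2), hc]
  calc _ ≤ ε * (Fintype.card V : ℝ) ^ 2 * (m : ℝ) ^ 2 := by gcongr
    _ = _ := by ring

/-- The indicator of the part `s`, centred by its density. -/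
def centred {ι Q : Type*} [Fintype ι] [DecidableEq Q] (p : ι → Q) (s : Q) (a : ι) : ℝ :=
  (if p a = s then (1 : ℝ) else 0) - 𝔼 b, (if p b = s then (1 : ℝ) else 0)

/-- The error made when the graph is replaced by the sample `(x, T)`: the regularity error `ε`,
the four-cycle bound for the cut distance to the sampled step function, and the deviations of
the part sizes. The parameters `η`, `η'` come from `y ≤ η + y⁴/η³` and `y ≤ η' + y²/η'`. -/
def sampleErr {ι V Q : Type*} [Fintype ι] [Fintype V] [DecidableEq V] [Fintype Q] [DecidableEq Q]
    (p : ι → Q) (u : Q → Q → ℝ) (ε η η' : ℝ) (x : V → ι) (T : Finset (Sym2 V)) : ℝ :=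
  ε + (η + sampleC4 p u x T / ((Fintype.card V : ℝ) ^ 4 * η ^ 3)) +
    2 * ∑ s, (η' + (∑ v, centred p s (x v)) ^ 2 / ((Fintype.card V : ℝ) ^ 2 * η'))

/-- The graph `G` is, after a permutation of its vertices, within `ε` of the blow-up of the
coloured simple graph `(T, cT)`. -/
def Good {ι S V : Type*} [Fintype ι] [DecidableEq S] [DecidableEq V] {m : ℕ} (e : ι ≃ V × Fin m)
    (G : WGraph ι S) (T : Finset (Sym2 V)) (cT : V → S) (ε : ℝ) : Prop :=
  ∃ π : Equiv.Perm ι,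
    CutLe (fun i j => G.w (π i) (π j) - if s((e i).1, (e j).1) ∈ T then (1 : ℝ) else 0) ε ∧
    ((Finset.univ.filter fun i => G.c (π i) ≠ cT (e i).1).card : ℝ) ≤ ε * Fintype.card ι

lemma Good.mono {ι S V : Type*} [Fintype ι] [DecidableEq S] [DecidableEq V] {m : ℕ}
    {e : ι ≃ V × Fin m} {G : WGraph ι S} {T : Finset (Sym2 V)} {cT : V → S} {ε ε' : ℝ}
    (h : Good e G T cT ε) (hε : ε ≤ ε') : Good e G T cT ε' := by
  obtain ⟨π, h1, h2⟩ := h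
  exact ⟨π, h1.mono hε, h2.trans (by gcongr)⟩

/-- Every outcome `(x, T)` of the sampling is within `sampleErr` of the graph. The permutation
matches the part labels `p` of the vertices with the labels `p ∘ x` of the blown-up sample; off the
few mismatched vertices, both graphs are compared with the step function `u`. -/
lemma good_of_sample {ι S V Q : Type*} [Fintype ι] [DecidableEq ι] [DecidableEq S] [Fintype V]
    [Nonempty V]
    [DecidableEq V] [Fintype Q] [DecidableEq Q] {m : ℕ} (hm : 0 < m) (e : ι ≃ V × Fin m)
    (G : WGraph ι S) (p : ι → Q) (u : Q → Q → ℝ)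
    (hu : ∀ q q', 0 ≤ u q q' ∧ u q q' ≤ 1) (hp : ∀ a a', p a = p a' → G.c a = G.c a')
    {ε η η' : ℝ} (hε : 0 ≤ ε) (hη : 0 < η) (hη' : 0 < η')
    (hcut : CutLe (fun i j => G.w i j - u (p i) (p j)) ε) (x : V → ι) (T : Finset (Sym2 V)) :
    Good e G T (fun v => G.c (x v)) (sampleErr p u ε η η' x T) := by
  set k : ℝ := (Fintype.card V : ℝ) with hk
  set n : ℝ := (Fintype.card ι : ℝ) with hn
  have hm' : (0 : ℝ) < m := by exact_mod_cast hm
  have hk0 : 0 < k := by rw [hk]; exact_mod_cast Fintype.card_pos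
  have hnk : n = k * m := by rw [hn, Fintype.card_congr e]; simp [hk]
  have hn0 : 0 < n := by rw [hnk]; positivity
  set C := sampleC4 p u x T / (k ^ 4 * η ^ 3) with hC
  have hC0 : 0 ≤ C := div_nonneg (sampleC4_nonneg _ _ _ _) (by positivity)
  set D := ∑ s, (η' + (∑ v, centred p s (x v)) ^ 2 / (k ^ 2 * η')) with hD
  have hD0 : 0 ≤ D := Finset.sum_nonneg fun s _ => by positivity
  have herr : sampleErr p u ε η η' x T = ε + (η + C) + 2 * D := rfl
  -- the sampled step function is close to the sampled graph
  have h1 : CutLe (sampleMat p u x T) (η + C) := by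
    refine cutLe_of_fourCycle (by positivity) ?_
    have e1 : sampleC4 p u x T = C * η ^ 3 * k ^ 4 := by
      rw [hC]; field_simp
    change sampleC4 p u x T ≤ _
    rw [e1]
    refine mul_le_mul_of_nonneg_right ?_ (by positivity)
    have : (η + C) ^ 4 = C * η ^ 3 + (η ^ 4 + 3 * (C * η ^ 3) + 6 * (η ^ 2 * C ^ 2)
      + 4 * (η * C ^ 3) + C ^ 4) := by ring
    rw [this]
    exact le_add_of_nonneg_right (by positivity)
  have h1' := h1.blowup hm e
  obtain ⟨π, hπ⟩ := exists_perm_matching p (fun i => p (x (e i).1))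
  set bad := Finset.univ.filter fun i => p (π i) ≠ p (x (e i).1) with hbad
  have hbadD : (bad.card : ℝ) ≤ D * n := by
    refine hπ.trans ?_
    rw [hD, Finset.sum_mul]
    refine Finset.sum_le_sum fun s _ => ?_
    set X := ∑ v, centred p s (x v) with hX
    have c1 : ((Finset.univ.filter fun i => p (x (e i).1) = s).card : ℝ) =
        (∑ v, (if p (x v) = s then (1 : ℝ) else 0)) * m := by
      rw [Finset.natCast_card_filter, ← Equiv.sum_comp e.symm, Fintype.sum_prod_type,
        Finset.sum_mul]
      simp [mul_comm]
    have c2 : ((Finset.univ.filter fun i => p i = s).card : ℝ) =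
        (𝔼 b, (if p b = s then (1 : ℝ) else 0)) * n := by
      rw [Finset.natCast_card_filter, Fintype.expect_eq_sum_div_card,
        div_mul_cancel₀ _ hn0.ne']
    have c3 : X = (∑ v, (if p (x v) = s then (1 : ℝ) else 0)) -
        k * 𝔼 b, (if p b = s then (1 : ℝ) else 0) := by
      simp [hX, centred, Finset.sum_sub_distrib, hk]
    rw [c1, c2]
    have c4 : (𝔼 b, (if p b = s then (1 : ℝ) else 0)) * n -
        (∑ v, (if p (x v) = s then (1 : ℝ) else 0)) * m = - (X / k) * n := by
      rw [c3, hnk]; field_simp; ring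
    rw [c4, abs_mul, abs_of_pos hn0, abs_neg]
    refine mul_le_mul_of_nonneg_right ?_ hn0.le
    have c5 : X ^ 2 / (k ^ 2 * η') = |X / k| ^ 2 / η' := by
      rw [sq_abs]; field_simp
    rw [c5]
    have c6 : 0 ≤ |X / k| := abs_nonneg _
    by_cases hle : |X / k| ≤ η'
    · exact hle.trans (le_add_of_nonneg_right (by positivity))
    · refine le_trans ?_ (le_add_of_nonneg_left hη'.le)
      rw [le_div_iff₀ hη']
      nlinarith
  refine ⟨π, ?_, ?_⟩
  · -- comparison of the step function with its sampled version
    have h2 : CutLe (fun i j => u (p (π i)) (p (π j)) - u (p (x (e i).1)) (p (x (e j).1)))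
        (2 * D) := by
      refine cutLe_of_sum_abs ?_
      calc _ ≤ ∑ i, ∑ j, ((if i ∈ bad then (1 : ℝ) else 0) + if j ∈ bad then (1 : ℝ) else 0) := by
            refine Finset.sum_le_sum fun i _ => Finset.sum_le_sum fun j _ => ?_
            by_cases hi : i ∈ bad
            · have : |u (p (π i)) (p (π j)) - u (p (x (e i).1)) (p (x (e j).1))| ≤ 1 := by
                have := hu (p (π i)) (p (π j))
                have := hu (p (x (e i).1)) (p (x (e j).1))
                rw [abs_le]; constructor <;> linarith
              refine this.trans ?_
              simp only [hi, if_true]; split_ifs <;> norm_num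
            · by_cases hj : j ∈ bad
              · have : |u (p (π i)) (p (π j)) - u (p (x (e i).1)) (p (x (e j).1))| ≤ 1 := by
                  have := hu (p (π i)) (p (π j))
                  have := hu (p (x (e i).1)) (p (x (e j).1))
                  rw [abs_le]; constructor <;> linarith
                refine this.trans ?_
                simp [hi, hj]
              · have hi' : p (π i) = p (x (e i).1) := by
                  simpa [hbad] using hi
                have hj' : p (π j) = p (x (e j).1) := by
                  simpa [hbad] using hj
                simp [hi, hj, hi', hj']
        _ = 2 * (bad.card * n) := by
            simp only [Finset.sum_add_distrib, Finset.sum_ite_mem, Finset.univ_inter,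
              Finset.sum_const, Finset.card_univ, nsmul_eq_mul, ← hn, ← Finset.mul_sum, mul_one]
            ring
        _ ≤ 2 * (D * n * n) := by gcongr
        _ = 2 * D * n ^ 2 := by ring
    have h3 := ((hcut.perm π).add h1'.neg).add h2
    rw [herr]
    convert h3 using 3 with i j
    simp only [sampleMat]; ring
  · have hsub : (Finset.univ.filter fun i => G.c (π i) ≠ G.c (x (e i).1)) ⊆ bad := by
      intro i hi
      simp only [hbad, Finset.mem_filter, Finset.mem_univ, true_and] at hi ⊢
      exact fun h => hi (hp _ _ h)
    calc _ ≤ (bad.card : ℝ) := by exact_mod_cast Finset.card_le_card hsub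
      _ ≤ D * n := hbadD
      _ ≤ _ := by
        refine mul_le_mul_of_nonneg_right ?_ hn0.le
        rw [herr]; linarith

/-- The expected error becomes small by choosing `η`, then `ε` small compared to `η ^ 3`, then `η'`
small compared to the number of parts, and finally `V` large. -/
lemma expect_sampleErr_le {ι S V Q : Type*} [Fintype ι] [Nonempty ι] [Fintype V] [Nonempty V]
    [DecidableEq V] [Fintype Q] [DecidableEq Q]
    (G : WGraph ι S) (p : ι → Q) (u : Q → Q → ℝ)
    (hu : ∀ q q', 0 ≤ u q q' ∧ u q q' ≤ 1)
    {ε η η' : ℝ} (hε : 0 ≤ ε) (hη : 0 < η) (hη' : 0 < η')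
    (hcut : CutLe (fun i j => G.w i j - u (p i) (p j)) ε) :
    𝔼 x : V → ι, ∑ T ∈ (allEdges V).powerset, G.prob x T * sampleErr p u ε η η' x T ≤
      ε + (η + (ε / η ^ 3 + 6 / (Fintype.card V * η ^ 3))) +
        2 * (Fintype.card Q * (η' + 1 / (Fintype.card V * η'))) := by
  set k : ℝ := (Fintype.card V : ℝ) with hk
  have hk0 : 0 < k := by rw [hk]; exact_mod_cast Fintype.card_pos
  have e1 : ∀ x : V → ι, ∑ T ∈ (allEdges V).powerset, G.prob x T * sampleErr p u ε η η' x T =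
      (ε + η + 2 * ∑ s, (η' + (∑ v, centred p s (x v)) ^ 2 / (k ^ 2 * η'))) +
      (∑ T ∈ (allEdges V).powerset, G.prob x T * sampleC4 p u x T) / (k ^ 4 * η ^ 3) := by
    intro x
    have : ∀ T ∈ (allEdges V).powerset, G.prob x T * sampleErr p u ε η η' x T =
      G.prob x T * (ε + η + 2 * ∑ s, (η' + (∑ v, centred p s (x v)) ^ 2 / (k ^ 2 * η'))) +
        G.prob x T * sampleC4 p u x T / (k ^ 4 * η ^ 3) := fun T _ => by
      simp only [sampleErr, ← hk]; ring
    rw [Finset.sum_congr rfl this, Finset.sum_add_distrib, ← Finset.sum_mul, G.sum_prob, one_mul,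
      Finset.sum_div]
  simp only [e1, Finset.expect_add_distrib, ← Finset.mul_expect, ← Finset.expect_div,
    Finset.expect_sum_comm, Fintype.expect_const]
  have hc4 := expect_sampleC4_le (V := V) G p u hu hε hcut
  rw [← hk] at hc4
  have t1 : (𝔼 x : V → ι, ∑ T ∈ (allEdges V).powerset, G.prob x T * sampleC4 p u x T)
      / (k ^ 4 * η ^ 3) ≤ ε / η ^ 3 + 6 / (k * η ^ 3) := by
    calc _ ≤ (ε * k ^ 4 + 6 * k ^ 3) / (k ^ 4 * η ^ 3) := by gcongr
      _ = _ := by field_simp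
  have t2 : ∑ s : Q, (η' + (𝔼 x : V → ι, (∑ v, centred p s (x v)) ^ 2) / (k ^ 2 * η')) ≤
      Fintype.card Q * (η' + 1 / (k * η')) := by
    calc _ ≤ ∑ s : Q, (η' + k / (k ^ 2 * η')) := by
          refine Finset.sum_le_sum fun s _ => ?_
          have : 𝔼 x : V → ι, (∑ v, centred p s (x v)) ^ 2 ≤ k := by
            refine expect_sq_sum_le _ (fun a => ?_) ?_
            · have b0 : 0 ≤ 𝔼 b, (if p b = s then (1 : ℝ) else 0) :=
                Finset.expect_nonneg fun b _ => by split_ifs <;> simp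
              have b1 : 𝔼 b, (if p b = s then (1 : ℝ) else 0) ≤ 1 := by
                calc _ ≤ 𝔼 _b : ι, (1 : ℝ) :=
                      Finset.expect_le_expect fun b _ => by split_ifs <;> simp
                  _ = 1 := Fintype.expect_const _
              unfold centred
              rw [abs_le]; split_ifs <;> constructor <;> linarith
            · simp only [centred, Finset.expect_sub_distrib]
              rw [Fintype.expect_const, sub_self]
          gcongr
      _ = _ := by
        simp only [Finset.sum_const, Finset.card_univ, nsmul_eq_mul]
        congr 2
        field_simp
  simp only [Finset.expect_sum_comm] at t1
  linarith

/-- For large `k`, uniformly in the graph, a random sample of size `k` is close to the graph it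
is drawn from with probability at least `3/4`. -/
lemma exists_sample_size (S : Type) [Fintype S] [DecidableEq S] {ε : ℝ} (hε : 0 < ε) :
    ∃ k : ℕ, 0 < k ∧ ∀ (m : ℕ) (_ : 0 < m) (ι : Type) [Fintype ι] (e : ι ≃ Fin k × Fin m)
      (G : WGraph ι S) (B : Finset (Sym2 (Fin k)) → (Fin k → S) → Prop)
      [∀ T cT, Decidable (B T cT)] (_ : ∀ T cT, B T cT → ¬ Good e G T cT ε),
      ∑ T ∈ (allEdges (Fin k)).powerset, ∑ cT : Fin k → S,
        (if B T cT then G.ind T cT else 0) ≤ 1 / 4 := by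
  set η := ε / 32 with hη
  have hη0 : 0 < η := by positivity
  set ε₀ := min (ε / 32) (ε / 32 * η ^ 3) with hε₀
  have hε₀0 : 0 < ε₀ := lt_min (by positivity) (by positivity)
  obtain ⟨r, hr⟩ := regularity S hε₀0
  set M : ℝ := (Fintype.card (S × (Fin r → Bool × Bool)) : ℝ) with hM
  have hM0 : 0 ≤ M := Nat.cast_nonneg _
  set η' := ε / (64 * (M + 1)) with hη'
  have hη'0 : 0 < η' := by positivity
  obtain ⟨k, hk⟩ := exists_nat_gt (max (192 / (ε * η ^ 3)) (64 * M / (ε * η')))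
  have hk1 : 192 / (ε * η ^ 3) < k := (le_max_left _ _).trans_lt hk
  have hk2 : 64 * M / (ε * η') < k := (le_max_right _ _).trans_lt hk
  have hk0' : (0 : ℝ) < k := lt_of_le_of_lt (by positivity) hk1
  have hk0 : 0 < k := by exact_mod_cast hk0'
  refine ⟨k, hk0, fun m hm ι _ e G B _ hB => ?_⟩
  classical
  have : Nonempty (Fin k) := ⟨⟨0, hk0⟩⟩
  have : Nonempty ι := ⟨e.symm (⟨0, hk0⟩, ⟨0, hm⟩)⟩
  obtain ⟨p, u, hu, hpc, hcut⟩ := hr ι G.w G.nonneg G.le_one G.c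
  have hp : ∀ a a', p a = p a' → G.c a = G.c a' := fun a a' h => by rw [← hpc, ← hpc, h]
  have hgood := fun x T => good_of_sample hm e G p u hu hp hε₀0.le hη0 hη'0 hcut x T
  have hE := expect_sampleErr_le (V := Fin k) G p u hu hε₀0.le hη0 hη'0 hcut
  rw [Fintype.card_fin, ← hM] at hE
  have hnn : ∀ (x : Fin k → ι) T, 0 ≤ sampleErr p u ε₀ η η' x T := fun x T => by
    have := sampleC4_nonneg p u x T
    have : 0 ≤ ∑ s, (η' + (∑ v, centred p s (x v)) ^ 2 / ((Fintype.card (Fin k) : ℝ) ^ 2 * η')) :=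
      Finset.sum_nonneg fun s _ => by positivity
    unfold sampleErr
    positivity
  -- Markov's inequality
  have hmarkov : ∀ T cT, ε * (if B T cT then G.ind T cT else 0) ≤
      𝔼 x : Fin k → ι, (G.prob x T * sampleErr p u ε₀ η η' x T) *
        ∏ v, (if G.c (x v) = cT v then (1 : ℝ) else 0) := fun T cT => by
    have hpn : ∀ x : Fin k → ι, 0 ≤ ∏ v, (if G.c (x v) = cT v then (1 : ℝ) else 0) :=
      fun x => Finset.prod_nonneg fun v _ => by split_ifs <;> simp
    split_ifs with hb
    · rw [WGraph.ind, Finset.mul_expect]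
      refine Finset.expect_le_expect fun x _ => ?_
      by_cases hx : ∀ v, G.c (x v) = cT v
      · have hx' : (fun v => G.c (x v)) = cT := funext hx
        have h1 : ε ≤ sampleErr p u ε₀ η η' x T := by
          by_contra hlt
          push Not at hlt
          exact hB T cT hb (hx' ▸ (hgood x T).mono hlt.le)
        rw [← mul_assoc, mul_comm ε]
        exact mul_le_mul_of_nonneg_right
          (mul_le_mul_of_nonneg_left h1 (G.prob_nonneg _ _)) (hpn x)
      · rw [Fintype.prod_ite_zero, if_neg hx]; simp
    · rw [mul_zero]
      exact Finset.expect_nonneg fun x _ =>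
        mul_nonneg (mul_nonneg (G.prob_nonneg _ _) (hnn _ _)) (hpn x)
  have hsum : ε * (∑ T ∈ (allEdges (Fin k)).powerset, ∑ cT : Fin k → S,
        (if B T cT then G.ind T cT else 0)) ≤
      𝔼 x : Fin k → ι, ∑ T ∈ (allEdges (Fin k)).powerset,
        G.prob x T * sampleErr p u ε₀ η η' x T := by
    rw [Finset.mul_sum]
    calc _ ≤ ∑ T ∈ (allEdges (Fin k)).powerset, ∑ cT : Fin k → S,
          𝔼 x : Fin k → ι, (G.prob x T * sampleErr p u ε₀ η η' x T) *
        ∏ v, (if G.c (x v) = cT v then (1 : ℝ) else 0) := by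
          refine Finset.sum_le_sum fun T _ => ?_
          rw [Finset.mul_sum]
          exact Finset.sum_le_sum fun cT _ => hmarkov T cT
      _ = _ := by
          simp only [← Finset.expect_sum_comm, ← Finset.mul_sum, G.sum_color, mul_one]
  have b1 : ε₀ ≤ ε / 32 := min_le_left _ _
  have b2 : ε₀ / η ^ 3 ≤ ε / 32 := by
    rw [div_le_iff₀ (by positivity)]; exact min_le_right _ _
  have b3 : 6 / (k * η ^ 3) ≤ ε / 32 := by
    rw [div_lt_iff₀ (by positivity)] at hk1
    rw [div_le_iff₀ (by positivity)]
    nlinarith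
  have b4 : M * η' ≤ ε / 64 := by
    rw [hη', mul_div_assoc', div_le_div_iff₀ (by positivity) (by positivity)]
    nlinarith
  have b5 : M * (1 / (k * η')) ≤ ε / 64 := by
    rw [div_lt_iff₀ (by positivity)] at hk2
    rw [mul_one_div, div_le_div_iff₀ (by positivity) (by positivity)]
    nlinarith
  have : ε * (∑ T ∈ (allEdges (Fin k)).powerset, ∑ cT : Fin k → S,
        (if B T cT then G.ind T cT else 0)) ≤ ε * (1 / 4) := by
    refine hsum.trans (hE.trans ?_)
    rw [mul_add M]
    linarith
  exact le_of_mul_le_mul_left this hε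

/-- The finite inverse counting lemma: graphs on the same number of vertices with nearly equal
coloured homomorphism densities are close in cut distance, up to a permutation. -/
theorem finite_inverse_counting (S : Type) [Fintype S] [DecidableEq S] {ε : ℝ} (hε : 0 < ε) :
    ∃ k : ℕ, 0 < k ∧ ∃ δ : ℝ, 0 < δ ∧ ∀ (m : ℕ) (_ : 0 < m) (G G' : WGraph (Fin (k * m)) S),
      (∀ T ⊆ allEdges (Fin k), ∀ cT : Fin k → S, |G.hom T cT - G'.hom T cT| ≤ δ) →
      ∃ π : Equiv.Perm (Fin (k * m)), CutLe (fun i j => G.w i j - G'.w (π i) (π j)) ε ∧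
        ((Finset.univ.filter fun i => G.c i ≠ G'.c (π i)).card : ℝ) ≤ ε * (k * m : ℕ) := by
  obtain ⟨k, hk, hsize⟩ := exists_sample_size S (half_pos hε)
  set E := allEdges (Fin k) with hE
  set N : ℝ := 2 ^ E.card * (Fintype.card (Fin k → S) : ℝ) * 2 ^ E.card with hN
  have hN0 : 0 ≤ N := by positivity
  refine ⟨k, hk, 1 / (4 * (N + 1)), by positivity, fun m hm G G' hG => ?_⟩
  classical
  set δ := 1 / (4 * (N + 1)) with hδ
  have hδ0 : 0 < δ := by positivity
  let e : Fin (k * m) ≃ Fin k × Fin m := finProdFinEquiv.symm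
  have : Nonempty (Fin (k * m)) := ⟨e.symm (⟨0, hk⟩, ⟨0, hm⟩)⟩
  have hind : ∀ T ∈ E.powerset, ∀ cT : Fin k → S, |G.ind T cT - G'.ind T cT| ≤ 2 ^ E.card * δ := by
    intro T hT cT
    rw [G.ind_eq, G'.ind_eq, ← Finset.sum_sub_distrib]
    calc _ ≤ ∑ R ∈ (E \ T).powerset, δ := by
          refine (Finset.abs_sum_le_sum_abs _ _).trans (Finset.sum_le_sum fun R hR => ?_)
          rw [← mul_sub, abs_mul, abs_pow, abs_neg, abs_one, one_pow, one_mul]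
          refine hG _ (Finset.union_subset (Finset.mem_powerset.1 hT) ?_) cT
          exact (Finset.mem_powerset.1 hR).trans Finset.sdiff_subset
      _ = 2 ^ (E \ T).card * δ := by simp
      _ ≤ _ := by
          gcongr
          · norm_num
          · exact Finset.sdiff_subset
  -- some sample outcome is good for both graphs
  have hex : ∃ T cT, Good e G T cT (ε / 2) ∧ Good e G' T cT (ε / 2) := by
    by_contra hno
    push Not at hno
    have h1 := hsize m hm _ e G (fun T cT => ¬ Good e G T cT (ε / 2)) (fun _ _ h => h)
    have h2 := hsize m hm _ e G' (fun T cT => Good e G T cT (ε / 2)) (fun T cT h => hno T cT h)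
    have h3 : ∑ T ∈ E.powerset, ∑ cT : Fin k → S,
        (if Good e G T cT (ε / 2) then G.ind T cT else 0) ≤
        ∑ T ∈ E.powerset, ∑ cT : Fin k → S,
        ((if Good e G T cT (ε / 2) then G'.ind T cT else 0) + 2 ^ E.card * δ) := by
      refine Finset.sum_le_sum fun T hT => Finset.sum_le_sum fun cT _ => ?_
      have := (le_abs_self _).trans (hind T hT cT)
      split_ifs
      · linarith
      · positivity
    have h4 : ∑ T ∈ E.powerset, ∑ _cT : Fin k → S, 2 ^ E.card * δ = N * δ := by
      simp only [Finset.sum_const, Finset.card_univ, Finset.card_powerset, nsmul_eq_mul, hN]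
      push_cast; ring
    have h5 : N * δ ≤ 1 / 4 := by
      rw [hδ, mul_one_div, div_le_div_iff₀ (by positivity) (by norm_num)]; linarith
    have h6 := G.sum_ind (V := Fin k)
    have h7 : ∑ T ∈ E.powerset, ∑ cT : Fin k → S, G.ind T cT =
        ∑ T ∈ E.powerset, ∑ cT : Fin k → S,
          (if ¬ Good e G T cT (ε / 2) then G.ind T cT else 0) +
        ∑ T ∈ E.powerset, ∑ cT : Fin k → S,
          (if Good e G T cT (ε / 2) then G.ind T cT else 0) := by
      simp only [← Finset.sum_add_distrib]
      refine Finset.sum_congr rfl fun T _ => Finset.sum_congr rfl fun cT _ => ?_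
      split_ifs <;> simp
    simp only [Finset.sum_add_distrib, h4] at h3
    linarith
  obtain ⟨T, cT, ⟨π, hπ, hπc⟩, ⟨π', hπ', hπc'⟩⟩ := hex
  refine ⟨π.symm.trans π', ?_, ?_⟩
  · have h := (hπ.add hπ'.neg).perm π.symm
    rw [add_halves] at h
    convert h using 3 with i j
    simp
  · set A := Finset.univ.filter fun i => G.c (π i) ≠ cT (e i).1
    set A' := Finset.univ.filter fun i => G'.c (π' i) ≠ cT (e i).1
    have hsub : (Finset.univ.filter fun i => G.c i ≠ G'.c ((π.symm.trans π') i)) ⊆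
        (A ∪ A').image π := by
      intro i hi
      replace hi := (Finset.mem_filter.1 hi).2
      rw [Finset.mem_image]
      refine ⟨π.symm i, ?_, by simp⟩
      by_contra hcon
      simp only [A, A', Finset.mem_union, Finset.mem_filter, Finset.mem_univ, true_and, not_or,
        not_not, Equiv.apply_symm_apply] at hcon
      exact hi (hcon.1.trans hcon.2.symm)
    have h1 : (Finset.univ.filter fun i => G.c i ≠ G'.c ((π.symm.trans π') i)).card ≤
        A.card + A'.card :=
      (Finset.card_le_card hsub).trans (Finset.card_image_le.trans (Finset.card_union_le _ _))
    have h1' : ((Finset.univ.filter fun i => G.c i ≠ G'.c ((π.symm.trans π') i)).card : ℝ) ≤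
        A.card + A'.card := by exact_mod_cast h1
    rw [Fintype.card_fin] at hπc hπc'
    linarith

/-! ### Lebesgue measure on the unit interval and the cut norm -/

/-- Lebesgue measure on the unit interval, as a probability measure on `ℝ`. -/
def mu01 : Measure ℝ := volume.restrict I01

instance : IsProbabilityMeasure mu01 := by
  refine ⟨?_⟩
  simp [mu01, I01]

theorem measurableSet_I01 : MeasurableSet I01 := measurableSet_Icc

theorem integrable_of_bdd {α : Type*} [MeasurableSpace α] {μ : Measure α} [IsFiniteMeasure μ]
    {f : α → ℝ} (hf : Measurable f) (C : ℝ) (hC : ∀ x, |f x| ≤ C) : Integrable f μ :=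
  Integrable.of_bound hf.aestronglyMeasurable C (Eventually.of_forall hC)

theorem measurable_section_integral {f : ℝ → ℝ → ℝ} (hf : Measurable (Function.uncurry f))
    {μ : Measure ℝ} [SFinite μ] : Measurable fun x => ∫ y, f x y ∂μ :=
  (hf.stronglyMeasurable.integral_prod_right (ν := μ)).measurable

theorem abs_integral_le_of_bdd {α : Type*} [MeasurableSpace α] {μ : Measure α}
    [IsZeroOrProbabilityMeasure μ] {f : α → ℝ} {C : ℝ} (h0 : 0 ≤ C) (hC : ∀ x, |f x| ≤ C) :
    |∫ x, f x ∂μ| ≤ C := by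
  have h := norm_integral_le_of_norm_le_const (μ := μ) (f := f) (C := C) (Eventually.of_forall hC)
  rw [Real.norm_eq_abs] at h
  refine h.trans ?_
  have : μ.real univ ≤ 1 := measureReal_le_one
  nlinarith

theorem abs_integral_le_of_bdd' {μ : Measure ℝ} (hμ : μ ≤ mu01) {f : ℝ → ℝ} {C : ℝ}
    (h0 : 0 ≤ C) (hC : ∀ x, |f x| ≤ C) : |∫ x, f x ∂μ| ≤ C := by
  have : IsFiniteMeasure μ := isFiniteMeasure_of_le mu01 hμ
  have h := norm_integral_le_of_norm_le_const (μ := μ) (f := f) (C := C) (Eventually.of_forall hC)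
  rw [Real.norm_eq_abs] at h
  refine h.trans ?_
  have h1 : μ.real univ ≤ mu01.real univ :=
    ENNReal.toReal_mono (measure_ne_top _ _) (hμ univ)
  rw [probReal_univ (μ := mu01)] at h1
  nlinarith

theorem restrict_I01_of_subset {A : Set ℝ} (hA : A ⊆ I01) :
    volume.restrict A = mu01.restrict A := by
  rw [mu01, Measure.restrict_restrict_of_subset hA]

theorem bddAbove_cutNorm {f : ℝ → ℝ → ℝ} {C : ℝ} (h0 : 0 ≤ C) (hC : ∀ x y, |f x y| ≤ C) :
    BddAbove { r | ∃ A B : Set ℝ, MeasurableSet A ∧ MeasurableSet B ∧ A ⊆ I01 ∧ B ⊆ I01 ∧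
      r = |∫ x in A, ∫ y in B, f x y| } := by
  refine ⟨C, ?_⟩
  rintro r ⟨A, B, _, _, hA, hB, rfl⟩
  rw [restrict_I01_of_subset hA, restrict_I01_of_subset hB]
  exact abs_integral_le_of_bdd' Measure.restrict_le_self h0 fun x =>
    abs_integral_le_of_bdd' Measure.restrict_le_self h0 (hC x)

theorem le_cutNorm {f : ℝ → ℝ → ℝ} {C : ℝ} (h0 : 0 ≤ C) (hC : ∀ x y, |f x y| ≤ C)
    {A B : Set ℝ} (hA : MeasurableSet A) (hB : MeasurableSet B) :
    |∫ x in A, ∫ y in B, f x y ∂mu01 ∂mu01| ≤ cutNorm f := by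
  refine le_csSup (bddAbove_cutNorm h0 hC) ⟨A ∩ I01, B ∩ I01, hA.inter measurableSet_I01,
    hB.inter measurableSet_I01, inter_subset_right, inter_subset_right, ?_⟩
  rw [mu01, Measure.restrict_restrict hA, Measure.restrict_restrict hB]

theorem cutNorm_le {f : ℝ → ℝ → ℝ} {M : ℝ}
    (h : ∀ A B, MeasurableSet A → MeasurableSet B →
      |∫ x in A, ∫ y in B, f x y ∂mu01 ∂mu01| ≤ M) : cutNorm f ≤ M := by
  refine csSup_le ⟨_, ∅, ∅, .empty, .empty, empty_subset _, empty_subset _, rfl⟩ ?_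
  rintro r ⟨A, B, hA, hB, hAI, hBI, rfl⟩
  rw [restrict_I01_of_subset hAI, restrict_I01_of_subset hBI]
  exact h A B hA hB

theorem cutNorm_nonneg (f : ℝ → ℝ → ℝ) : 0 ≤ cutNorm f := by
  refine Real.sSup_nonneg ?_
  rintro r ⟨A, B, _, _, _, _, rfl⟩
  exact abs_nonneg _

/-- Among weights in `[0,1]`, the integral of `a * g` is largest for the indicator of
`{0 ≤ g}`. -/
theorem integral_mul_le_setIntegral {g a : ℝ → ℝ} (hg : Measurable g) {C : ℝ}
    (hC : ∀ x, |g x| ≤ C) (ha : Measurable a) (ha0 : ∀ x, 0 ≤ a x) (ha1 : ∀ x, a x ≤ 1) :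
    ∫ x, g x * a x ∂mu01 ≤ ∫ x in {x | 0 ≤ g x}, g x ∂mu01 := by
  have hm : MeasurableSet {x | 0 ≤ g x} := measurableSet_le measurable_const hg
  rw [← integral_indicator hm]
  have hb : ∀ x, |g x * a x| ≤ C := fun x => by
    rw [abs_mul, abs_of_nonneg (ha0 x)]
    nlinarith [hC x, abs_nonneg (g x), ha0 x, ha1 x]
  refine integral_mono (integrable_of_bdd (hg.mul ha) C hb)
    ((integrable_of_bdd hg C hC).indicator hm) fun x => ?_
  by_cases hx : 0 ≤ g x
  · rw [indicator_of_mem (show x ∈ {x | 0 ≤ g x} from hx)]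
    nlinarith [ha1 x]
  · rw [indicator_of_notMem (show x ∉ {x | 0 ≤ g x} from hx)]
    nlinarith [ha0 x]

theorem integral_test_le {f : ℝ → ℝ → ℝ} (hf : Measurable (Function.uncurry f)) {C M : ℝ}
    (h0 : 0 ≤ C) (hC : ∀ x y, |f x y| ≤ C)
    (hM : ∀ A B, MeasurableSet A → MeasurableSet B →
      ∫ x in A, ∫ y in B, f x y ∂mu01 ∂mu01 ≤ M)
    {a b : ℝ → ℝ} (ha : Measurable a) (ha0 : ∀ x, 0 ≤ a x) (ha1 : ∀ x, a x ≤ 1)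
    (hb : Measurable b) (hb0 : ∀ x, 0 ≤ b x) (hb1 : ∀ x, b x ≤ 1) :
    ∫ x, ∫ y, f x y * (a x * b y) ∂mu01 ∂mu01 ≤ M := by
  have hfb : Measurable (Function.uncurry fun x y => f x y * b y) :=
    hf.mul (hb.comp measurable_snd)
  have hfbC : ∀ x y, |f x y * b y| ≤ C := fun x y => by
    rw [abs_mul, abs_of_nonneg (hb0 y)]
    nlinarith [hC x y, abs_nonneg (f x y), hb0 y, hb1 y]
  set g : ℝ → ℝ := fun x => ∫ y, f x y * b y ∂mu01 with hg
  have hgm : Measurable g := measurable_section_integral hfb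
  have hgC : ∀ x, |g x| ≤ C := fun x => abs_integral_le_of_bdd h0 (hfbC x)
  set A : Set ℝ := {x | 0 ≤ g x} with hA
  have hAm : MeasurableSet A := measurableSet_le measurable_const hgm
  have hswap : Measurable (Function.uncurry fun y x => f x y) := hf.comp measurable_swap
  set h : ℝ → ℝ := fun y => ∫ x in A, f x y ∂mu01 with hh
  have hhm : Measurable h := measurable_section_integral hswap
  have hhC : ∀ x, |h x| ≤ C := fun y =>
    abs_integral_le_of_bdd' Measure.restrict_le_self h0 fun x => hC x y
  calc ∫ x, ∫ y, f x y * (a x * b y) ∂mu01 ∂mu01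
      = ∫ x, g x * a x ∂mu01 := by
        refine integral_congr_ae (Eventually.of_forall fun x => ?_)
        simp only [hg]
        rw [← integral_mul_const]
        exact integral_congr_ae (Eventually.of_forall fun y => by simp only; ring)
    _ ≤ ∫ x in A, g x ∂mu01 := integral_mul_le_setIntegral hgm hgC ha ha0 ha1
    _ = ∫ y, ∫ x in A, f x y * b y ∂mu01 ∂mu01 :=
        integral_integral_swap (integrable_of_bdd hfb C fun p => hfbC p.1 p.2)
    _ = ∫ y, h y * b y ∂mu01 := by
        refine integral_congr_ae (Eventually.of_forall fun y => ?_)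
        simp only [hh]
        rw [← integral_mul_const]
    _ ≤ ∫ y in {y | 0 ≤ h y}, h y ∂mu01 := integral_mul_le_setIntegral hhm hhC hb hb0 hb1
    _ = ∫ x in A, ∫ y in {y | 0 ≤ h y}, f x y ∂mu01 ∂mu01 :=
        integral_integral_swap (integrable_of_bdd hswap C fun p => hC p.2 p.1)
    _ ≤ M := hM _ _ hAm (measurableSet_le measurable_const hhm)

/-- The cut norm controls integrals against products of `[0,1]`-valued test functions. -/
theorem abs_integral_test_le_cutNorm {f : ℝ → ℝ → ℝ} (hf : Measurable (Function.uncurry f))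
    {C : ℝ} (h0 : 0 ≤ C) (hC : ∀ x y, |f x y| ≤ C)
    {a b : ℝ → ℝ} (ha : Measurable a) (ha0 : ∀ x, 0 ≤ a x) (ha1 : ∀ x, a x ≤ 1)
    (hb : Measurable b) (hb0 : ∀ x, 0 ≤ b x) (hb1 : ∀ x, b x ≤ 1) :
    |∫ x, ∫ y, f x y * (a x * b y) ∂mu01 ∂mu01| ≤ cutNorm f := by
  rw [abs_le']
  constructor
  · exact integral_test_le hf h0 hC
      (fun A B hA hB => (le_abs_self _).trans (le_cutNorm h0 hC hA hB)) ha ha0 ha1 hb hb0 hb1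
  · have h := integral_test_le (f := fun x y => - f x y) (M := cutNorm f) hf.neg h0
      (fun x y => by rw [abs_neg]; exact hC x y)
      (fun A B hA hB => by
        simp only [integral_neg]
        exact (neg_le_abs _).trans (le_cutNorm h0 hC hA hB)) ha ha0 ha1 hb hb0 hb1
    simpa only [neg_mul, integral_neg] using h

/-! ### The counting lemma: kernels -/

section Counting

set_option linter.unusedSectionVars false

variable {V : Type*} [Fintype V] [DecidableEq V]

/-- Product of copies of Lebesgue measure on the unit interval. -/
def piMu (V : Type*) [Fintype V] : Measure (V → ℝ) := Measure.pi fun _ => mu01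

instance : IsProbabilityMeasure (piMu V) := by unfold piMu; infer_instance

theorem measurable_update_pair (u : V) :
    Measurable fun p : (V → ℝ) × ℝ => Function.update p.1 u p.2 := by
  rw [measurable_pi_iff]
  intro i
  by_cases h : i = u
  · subst h; simpa using measurable_snd
  · simp only [Function.update_of_ne h]
    exact (measurable_pi_apply i).comp measurable_fst

/-- Resampling one coordinate preserves the product measure. -/
theorem measurePreserving_update (u : V) :
    MeasurePreserving (fun p : (V → ℝ) × ℝ => Function.update p.1 u p.2)
      ((piMu V).prod mu01) (piMu V) := by
  refine ⟨measurable_update_pair u, ?_⟩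
  symm
  refine Measure.pi_eq fun s hs => ?_
  rw [Measure.map_apply (measurable_update_pair u) (MeasurableSet.univ_pi hs)]
  have : (fun p : (V → ℝ) × ℝ => Function.update p.1 u p.2) ⁻¹' (univ.pi s) =
      (univ.pi (Function.update s u univ)) ×ˢ s u := by
    ext p
    simp only [mem_preimage, Set.mem_pi, mem_univ, true_imp_iff, mem_prod]
    constructor
    · intro h
      refine ⟨fun i => ?_, by simpa using h u⟩
      by_cases hi : i = u
      · subst hi; simp
      · simpa [Function.update_of_ne hi] using h i
    · rintro ⟨h, h'⟩ i
      by_cases hi : i = u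
      · subst hi; simpa using h'
      · simpa [Function.update_of_ne hi] using h i
  rw [this, Measure.prod_prod, piMu, Measure.pi_pi,
    ← Finset.mul_prod_erase Finset.univ (fun i => mu01 (s i)) (Finset.mem_univ u),
    ← Finset.mul_prod_erase Finset.univ _ (Finset.mem_univ u)]
  simp only [Function.update_self, measure_univ, one_mul]
  rw [mul_comm]
  congr 1
  refine Finset.prod_congr rfl fun i hi => ?_
  rw [Function.update_of_ne (Finset.ne_of_mem_erase hi)]

theorem integral_update (u : V) {F : (V → ℝ) → ℝ} (hF : Measurable F) {C : ℝ}
    (hC : ∀ x, |F x| ≤ C) :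
    ∫ x, F x ∂(piMu V) = ∫ x, ∫ s, F (Function.update x u s) ∂mu01 ∂(piMu V) := by
  rw [← (measurePreserving_update u).map_eq,
    integral_map (measurable_update_pair u).aemeasurable hF.aestronglyMeasurable,
    (measurePreserving_update u).map_eq]
  exact integral_prod (fun p : (V → ℝ) × ℝ => F (Function.update p.1 u p.2))
    (integrable_of_bdd (hF.comp (measurable_update_pair u)) C fun p => hC _)

/-- `R` is a product of two measurable `[0,1]`-valued functions, the first not depending on
coordinate `v` and the second not depending on coordinate `u`. -/
def Splits (u v : V) (R : (V → ℝ) → ℝ) : Prop :=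
  ∃ α β : (V → ℝ) → ℝ, Measurable α ∧ Measurable β ∧
    (∀ x, 0 ≤ α x ∧ α x ≤ 1) ∧ (∀ x, 0 ≤ β x ∧ β x ≤ 1) ∧
    (∀ x t, α (Function.update x v t) = α x) ∧ (∀ x s, β (Function.update x u s) = β x) ∧
    ∀ x, R x = α x * β x

theorem mul_mem_unit {a b : ℝ} (ha : 0 ≤ a ∧ a ≤ 1) (hb : 0 ≤ b ∧ b ≤ 1) :
    0 ≤ a * b ∧ a * b ≤ 1 :=
  ⟨mul_nonneg ha.1 hb.1, mul_le_one₀ ha.2 hb.1 hb.2⟩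

theorem Splits.mul {u v : V} {R R' : (V → ℝ) → ℝ} (h : Splits u v R) (h' : Splits u v R') :
    Splits u v fun x => R x * R' x := by
  obtain ⟨α, β, h1, h2, h3, h4, h5, h6, h7⟩ := h
  obtain ⟨α', β', h1', h2', h3', h4', h5', h6', h7'⟩ := h'
  refine ⟨fun x => α x * α' x, fun x => β x * β' x, h1.mul h1', h2.mul h2',
    fun x => mul_mem_unit (h3 x) (h3' x), fun x => mul_mem_unit (h4 x) (h4' x),
    fun x t => by simp only [h5, h5'], fun x t => by simp only [h6, h6'], fun x => ?_⟩
  simp only [h7, h7']; ring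

theorem Splits.one (u v : V) : Splits u v fun _ => 1 :=
  ⟨fun _ => 1, fun _ => 1, measurable_const, measurable_const, by simp, by simp, by simp,
    by simp, by simp⟩

theorem Splits.prod {κ : Type*} {u v : V} (F : Finset κ) {R : κ → (V → ℝ) → ℝ}
    (h : ∀ k ∈ F, Splits u v (R k)) : Splits u v fun x => ∏ k ∈ F, R k x := by
  classical
  induction F using Finset.induction_on with
  | empty => simpa using Splits.one u v
  | insert a F ha ih =>
    simp only [Finset.prod_insert ha]
    exact (h a (Finset.mem_insert_self _ _)).mul
      (ih fun k hk => h k (Finset.mem_insert_of_mem hk))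

/-- The edge factor `W(x_u, x_v)` for `e = s(u, v)`. -/
def Graphon.edge (W : Graphon) {V : Type*} (x : V → ℝ) (e : Sym2 V) : ℝ :=
  Sym2.lift ⟨fun u w => W.W (x u) (x w), fun _ _ => W.symm _ _⟩ e

theorem Graphon.edge_mk (W : Graphon) (x : V → ℝ) (u v : V) :
    W.edge x s(u, v) = W.W (x u) (x v) := rfl

theorem Graphon.edge_mem (W : Graphon) (x : V → ℝ) (e : Sym2 V) :
    0 ≤ W.edge x e ∧ W.edge x e ≤ 1 := by
  induction e using Sym2.ind with
  | _ u v => exact ⟨W.nonneg _ _, W.le_one _ _⟩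

theorem Graphon.measurable_edge (W : Graphon) (e : Sym2 V) :
    Measurable fun x : V → ℝ => W.edge x e := by
  induction e using Sym2.ind with
  | _ u v =>
    have h : Measurable fun x : V → ℝ => (x u, x v) :=
      (measurable_pi_apply u).prodMk (measurable_pi_apply v)
    exact W.measurable.comp h

theorem Graphon.edge_update (W : Graphon) (x : V → ℝ) {e : Sym2 V} {v : V} (hv : v ∉ e) (t : ℝ) :
    W.edge (Function.update x v t) e = W.edge x e := by
  induction e using Sym2.ind with
  | _ p q =>
    rw [Sym2.mem_iff, not_or] at hv
    rw [edge_mk, edge_mk, Function.update_of_ne (Ne.symm hv.1), Function.update_of_ne (Ne.symm hv.2)]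

theorem Graphon.splits_edge (W : Graphon) {u v : V} (huv : u ≠ v) {e : Sym2 V} (he : e ≠ s(u, v)) :
    Splits u v fun x => W.edge x e := by
  by_cases hv : v ∈ e
  · have hu : u ∉ e := fun hu => he ((Sym2.mem_and_mem_iff huv).1 ⟨hu, hv⟩)
    exact ⟨fun _ => 1, fun x => W.edge x e, measurable_const, W.measurable_edge e, by simp,
      fun x => W.edge_mem x e, by simp, fun x s => W.edge_update x hu s, by simp⟩
  · exact ⟨fun x => W.edge x e, fun _ => 1, W.measurable_edge e, measurable_const,
      fun x => W.edge_mem x e, by simp, fun x s => W.edge_update x hv s, by simp, by simp⟩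

theorem Graphon.measurable_sub (W W' : Graphon) :
    Measurable (Function.uncurry fun x y => W.W x y - W'.W x y) :=
  W.measurable.sub W'.measurable

theorem Graphon.abs_sub_le (W W' : Graphon) (x y : ℝ) : |W.W x y - W'.W x y| ≤ 1 := by
  rw [abs_le]
  constructor <;> linarith [W.nonneg x y, W'.nonneg x y, W.le_one x y, W'.le_one x y]

/-- Replacing one edge factor changes the density by at most the cut norm. -/
theorem abs_integral_edge_sub_le (W W' : Graphon) {u v : V} (huv : u ≠ v)
    {R : (V → ℝ) → ℝ} (hR : Splits u v R) :
    |∫ x, (W.edge x s(u, v) - W'.edge x s(u, v)) * R x ∂(piMu V)| ≤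
      cutNorm fun x y => W.W x y - W'.W x y := by
  obtain ⟨α, β, h1, h2, h3, h4, h5, h6, h7⟩ := hR
  set f : ℝ → ℝ → ℝ := fun x y => W.W x y - W'.W x y with hf
  have hfm := W.measurable_sub W'
  set F : (V → ℝ) → ℝ := fun x => f (x u) (x v) * (α x * β x) with hF
  have hpr : Measurable fun x : V → ℝ => (x u, x v) :=
    (measurable_pi_apply u).prodMk (measurable_pi_apply v)
  have hFm : Measurable F := (hfm.comp hpr).mul (h1.mul h2)
  have hFC : ∀ x, |F x| ≤ 1 := fun x => by
    have hm := mul_mem_unit (h3 x) (h4 x)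
    rw [hF, abs_mul, abs_of_nonneg hm.1]
    exact mul_le_one₀ (W.abs_sub_le W' _ _) hm.1 hm.2
  have e1 : ∫ x, (W.edge x s(u, v) - W'.edge x s(u, v)) * R x ∂(piMu V) = ∫ x, F x ∂(piMu V) := by
    refine integral_congr_ae (Eventually.of_forall fun x => ?_)
    simp only [hF, hf, Graphon.edge_mk, h7]
  have hFu : Measurable fun x => ∫ t, F (Function.update x v t) ∂mu01 :=
    (StronglyMeasurable.integral_prod_right (ν := mu01)
      (f := fun x t => F (Function.update x v t))
      (hFm.comp (measurable_update_pair v)).stronglyMeasurable).measurable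
  rw [e1, integral_update v hFm hFC,
    integral_update u hFu (fun x => abs_integral_le_of_bdd zero_le_one fun t => hFC _)]
  refine abs_integral_le_of_bdd (cutNorm_nonneg _) fun x => ?_
  have e2 : ∀ s t, F (Function.update (Function.update x u s) v t) =
      f s t * (α (Function.update x u s) * β (Function.update x v t)) := fun s t => by
    simp only [hF, h5]
    rw [Function.update_self, Function.update_of_ne huv, Function.update_self,
      Function.update_comm huv, h6]
  simp only [e2]
  have hup : ∀ w : V, Measurable fun s => Function.update x w s := fun w =>
    (measurable_update_pair w).comp (measurable_const.prodMk measurable_id)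
  exact abs_integral_test_le_cutNorm hfm zero_le_one (W.abs_sub_le W')
    (h1.comp (hup u)) (fun s => (h3 _).1) (fun s => (h3 _).2)
    (h2.comp (hup v)) (fun s => (h4 _).1) (fun s => (h4 _).2)

/-- Telescoping over the edges. -/
theorem abs_integral_prod_edge_sub_le (W W' : Graphon) (T : Finset (Sym2 V))
    (hT : ∀ e ∈ T, ¬ e.IsDiag) (R : (V → ℝ) → ℝ) (hRm : Measurable R)
    (hR01 : ∀ x, 0 ≤ R x ∧ R x ≤ 1) (hR : ∀ u v, s(u, v) ∈ T → Splits u v R) :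
    |∫ x, (∏ e ∈ T, W.edge x e) * R x ∂(piMu V) - ∫ x, (∏ e ∈ T, W'.edge x e) * R x ∂(piMu V)| ≤
      T.card * cutNorm fun x y => W.W x y - W'.W x y := by
  induction T using Finset.induction_on generalizing R with
  | empty => simp
  | insert e T he ih =>
    have hprod : ∀ U : Graphon, Measurable (fun x : V → ℝ => ∏ e ∈ T, U.edge x e) := fun U =>
      Finset.measurable_prod _ fun e _ => U.measurable_edge e
    have hprod01 : ∀ (U : Graphon) (x : V → ℝ),
        0 ≤ (∏ e ∈ T, U.edge x e) ∧ (∏ e ∈ T, U.edge x e) ≤ 1 := fun U x =>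
      ⟨Finset.prod_nonneg fun e _ => (U.edge_mem x e).1,
        Finset.prod_le_one (fun e _ => (U.edge_mem x e).1) fun e _ => (U.edge_mem x e).2⟩
    have ne_of : ∀ u v, s(u, v) ∈ insert e T → u ≠ v := fun u v h huv =>
      hT _ h (by rw [Sym2.mk_isDiag_iff]; exact huv)
    have h1 := ih (fun e' he' => hT e' (Finset.mem_insert_of_mem he'))
      (fun x => W.edge x e * R x) ((W.measurable_edge e).mul hRm)
      (fun x => mul_mem_unit (W.edge_mem x e) (hR01 x))
      (fun u v huv => (W.splits_edge (ne_of u v (Finset.mem_insert_of_mem huv))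
        (fun h => he (by rw [h]; exact huv))).mul (hR u v (Finset.mem_insert_of_mem huv)))
    have h2 : |∫ x, (W.edge x e - W'.edge x e) * ((∏ e ∈ T, W'.edge x e) * R x) ∂(piMu V)| ≤
        cutNorm fun x y => W.W x y - W'.W x y := by
      have hmem := Finset.mem_insert_self e T
      induction e using Sym2.ind with
      | _ u v =>
        refine abs_integral_edge_sub_le W W' (ne_of u v hmem) ((Splits.prod T fun e' he' => ?_).mul
          (hR u v hmem))
        exact W'.splits_edge (ne_of u v hmem) fun h => he (by rw [← h]; exact he')
    have hint : ∀ U : Graphon, Integrable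
        (fun x => U.edge x e * ((∏ e ∈ T, W'.edge x e) * R x)) (piMu V) := fun U =>
      integrable_of_bdd ((U.measurable_edge e).mul ((hprod W').mul hRm)) 1 fun x => by
        have := mul_mem_unit (U.edge_mem x e) (mul_mem_unit (hprod01 W' x) (hR01 x))
        rw [abs_of_nonneg this.1]; exact this.2
    simp only [sub_mul] at h2
    rw [integral_sub (hint W) (hint W')] at h2
    simp only [Finset.prod_insert he, Finset.card_insert_of_notMem he]
    have r1 : ∀ x, W.edge x e * (∏ e ∈ T, W.edge x e) * R x =
        (∏ e ∈ T, W.edge x e) * (W.edge x e * R x) := fun x => by ring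
    have r2 : ∀ x, W'.edge x e * (∏ e ∈ T, W'.edge x e) * R x =
        W'.edge x e * ((∏ e ∈ T, W'.edge x e) * R x) := fun x => by ring
    have r3 : ∀ x, W.edge x e * ((∏ e ∈ T, W'.edge x e) * R x) =
        (∏ e ∈ T, W'.edge x e) * (W.edge x e * R x) := fun x => by ring
    simp only [r3] at h2
    simp only [r1, r2]
    have := abs_sub_le (∫ x, (∏ e ∈ T, W.edge x e) * (W.edge x e * R x) ∂(piMu V))
      (∫ x, (∏ e ∈ T, W'.edge x e) * (W.edge x e * R x) ∂(piMu V))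
      (∫ x, W'.edge x e * ((∏ e ∈ T, W'.edge x e) * R x) ∂(piMu V))
    push_cast
    linarith

end Counting

/-! ### The counting lemma: colorings and invariance -/

section Counting

set_option linter.unusedSectionVars false

variable {V : Type*} [Fintype V] [DecidableEq V] {S : Type*} [Fintype S] [DecidableEq S]

/-- The color factor: the indicator that the sample `x` realises the coloring `cT`. -/
def colorInd (c : ℝ → S) (cT : V → S) (x : V → ℝ) : ℝ :=
  ∏ v, if c (x v) = cT v then (1 : ℝ) else 0

theorem measurable_colorFactor {c : ℝ → S} (hc : ∀ s, MeasurableSet (c ⁻¹' {s})) (s : S) :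
    Measurable fun t : ℝ => if c t = s then (1 : ℝ) else 0 :=
  Measurable.ite (hc s) measurable_const measurable_const

theorem colorFactor_mem (c : ℝ → S) (s : S) (t : ℝ) :
    0 ≤ (if c t = s then (1 : ℝ) else 0) ∧ (if c t = s then (1 : ℝ) else 0) ≤ 1 := by
  split_ifs <;> norm_num

theorem splits_colorInd {c : ℝ → S} (hc : ∀ s, MeasurableSet (c ⁻¹' {s})) (cT : V → S)
    {u v : V} (huv : u ≠ v) : Splits u v (colorInd c cT) := by
  refine Splits.prod Finset.univ fun w _ => ?_
  have hm : Measurable fun x : V → ℝ => if c (x w) = cT w then (1 : ℝ) else 0 :=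
    (measurable_colorFactor hc (cT w)).comp (measurable_pi_apply w)
  by_cases hw : w = v
  · refine ⟨fun _ => 1, _, measurable_const, hm, by simp, fun x => colorFactor_mem c _ _, by simp,
      fun x s => ?_, fun x => (one_mul _).symm⟩
    rw [Function.update_of_ne (by rw [hw]; exact huv.symm)]
  · refine ⟨_, fun _ => 1, hm, measurable_const, fun x => colorFactor_mem c _ _, by simp,
      fun x s => ?_, by simp, fun x => (mul_one _).symm⟩
    rw [Function.update_of_ne hw]

theorem measurable_colorInd {c : ℝ → S} (hc : ∀ s, MeasurableSet (c ⁻¹' {s})) (cT : V → S) :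
    Measurable (colorInd c cT) :=
  Finset.measurable_prod _ fun w _ =>
    (measurable_colorFactor hc (cT w)).comp (measurable_pi_apply w)

theorem colorInd_mem (c : ℝ → S) (cT : V → S) (x : V → ℝ) :
    0 ≤ colorInd c cT x ∧ colorInd c cT x ≤ 1 :=
  ⟨Finset.prod_nonneg fun _ _ => (colorFactor_mem c _ _).1,
    Finset.prod_le_one (fun _ _ => (colorFactor_mem c _ _).1) fun _ _ => (colorFactor_mem c _ _).2⟩

theorem abs_colorInd_sub_le (c c' : ℝ → S) (cT : V → S) (x : V → ℝ) :
    |colorInd c cT x - colorInd c' cT x| ≤ ∑ v, if c (x v) ≠ c' (x v) then (1 : ℝ) else 0 := by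
  by_cases h : ∀ v, c (x v) = c' (x v)
  · simp [colorInd, h]
  · push Not at h
    obtain ⟨v, hv⟩ := h
    have h1 : |colorInd c cT x - colorInd c' cT x| ≤ 1 := by
      have := colorInd_mem c cT x
      have := colorInd_mem c' cT x
      rw [abs_le]; constructor <;> linarith
    refine h1.trans ?_
    have := Finset.single_le_sum (f := fun v => if c (x v) ≠ c' (x v) then (1 : ℝ) else 0)
      (fun v _ => by positivity) (Finset.mem_univ v)
    simpa [hv] using this

/-- The measure of the set where two colorings of `[0,1]` disagree. -/
def colorMis (c c' : ℝ → S) : ℝ := mu01.real {t | c t ≠ c' t}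

theorem measurableSet_colorMis {c c' : ℝ → S} (hc : ∀ s, MeasurableSet (c ⁻¹' {s}))
    (hc' : ∀ s, MeasurableSet (c' ⁻¹' {s})) : MeasurableSet {t | c t ≠ c' t} := by
  have : {t | c t ≠ c' t} = ⋃ s, (c ⁻¹' {s} \ c' ⁻¹' {s}) := by
    ext t
    simp only [mem_ofPred_eq, mem_iUnion, Set.mem_sdiff, mem_preimage, mem_singleton_iff]
    constructor
    · intro h; exact ⟨c t, rfl, fun h' => h h'.symm⟩
    · rintro ⟨s, h1, h2⟩ h; exact h2 (by rw [← h, h1])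
  rw [this]
  exact MeasurableSet.iUnion fun s => (hc s).diff (hc' s)

theorem colorDist_eq {c c' : ℝ → S} (hc : ∀ s, MeasurableSet (c ⁻¹' {s}))
    (hc' : ∀ s, MeasurableSet (c' ⁻¹' {s})) :
    colorDist c c' = ∑ s, mu01.real ((c ⁻¹' {s}) ∆ (c' ⁻¹' {s})) := by
  refine Finset.sum_congr rfl fun s _ => ?_
  rw [measureReal_def, mu01, Measure.restrict_apply ((hc s).symmDiff (hc' s)),
    ← Set.inter_symmDiff_distrib_left, inter_comm]

theorem colorMis_le {c c' : ℝ → S} (hc : ∀ s, MeasurableSet (c ⁻¹' {s}))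
    (hc' : ∀ s, MeasurableSet (c' ⁻¹' {s})) : colorMis c c' ≤ colorDist c c' := by
  rw [colorDist_eq hc hc', colorMis]
  refine le_trans ?_ (measureReal_iUnion_fintype_le _)
  refine measureReal_mono ?_
  intro t ht
  exact mem_iUnion.2 ⟨c t, Or.inl ⟨rfl, fun h => ht (Eq.symm h)⟩⟩

/-- Every disagreement is counted in exactly two symmetric differences. -/
theorem colorDist_le {c c' : ℝ → S} (hc : ∀ s, MeasurableSet (c ⁻¹' {s}))
    (hc' : ∀ s, MeasurableSet (c' ⁻¹' {s})) : colorDist c c' ≤ 2 * colorMis c c' := by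
  rw [colorDist_eq hc hc', colorMis]
  have hm := fun s => (hc s).symmDiff (hc' s)
  have h1 : ∀ s, mu01.real ((c ⁻¹' {s}) ∆ (c' ⁻¹' {s})) =
      ∫ t, ((c ⁻¹' {s}) ∆ (c' ⁻¹' {s})).indicator 1 t ∂mu01 := fun s =>
    (integral_indicator_one (hm s)).symm
  have hI : ∀ A : Set ℝ, MeasurableSet A → Integrable (A.indicator (1 : ℝ → ℝ)) mu01 := fun A hA =>
    (integrable_const (1 : ℝ)).indicator hA
  have hmm := measurableSet_colorMis hc hc'
  rw [← integral_indicator_one hmm, ← integral_const_mul]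
  simp only [h1]
  rw [← integral_finsetSum _ fun s _ => hI _ (hm s)]
  refine integral_mono (integrable_finsetSum _ fun s _ => hI _ (hm s))
    ((hI _ hmm).const_mul 2) fun t => ?_
  by_cases h : c t = c' t
  · have : ∀ s, ((c ⁻¹' {s}) ∆ (c' ⁻¹' {s})).indicator (1 : ℝ → ℝ) t = 0 := fun s => by
      refine indicator_of_notMem ?_ _
      simp [mem_symmDiff, h]
    simp [this, h]
  · calc _ ≤ ∑ s, ((if c t = s then (1 : ℝ) else 0) + if c' t = s then (1 : ℝ) else 0) := by
          refine Finset.sum_le_sum fun s _ => ?_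
          simp only [indicator, mem_symmDiff, mem_preimage, mem_singleton_iff, Pi.one_apply]
          by_cases h1 : c t = s <;> by_cases h2 : c' t = s <;> simp [h1, h2]
      _ = 2 := by
          rw [Finset.sum_add_distrib]; norm_num
      _ = _ := by simp [h]

theorem integral_eval (v : V) {g : ℝ → ℝ} (hg : Measurable g) :
    ∫ x, g (x v) ∂(piMu V) = ∫ t, g t ∂mu01 := by
  have h := measurePreserving_eval (fun _ : V => mu01) v
  rw [← h.map_eq, integral_map h.measurable.aemeasurable hg.aestronglyMeasurable]
  rfl

/-- The colored homomorphism density with an arbitrary set of edges. -/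
def homDens (W : Graphon) (c : ℝ → S) (T : Finset (Sym2 V)) (cT : V → S) : ℝ :=
  ∫ x, (∏ e ∈ T, W.edge x e) * colorInd c cT x ∂(piMu V)

theorem tS_eq {V : Type} [Fintype V] [DecidableEq V] (H : SimpleGraph V) [DecidableRel H.Adj]
    (cH : V → S) (W : CGraphon S) : tS H cH W = homDens W.K W.c H.edgeFinset cH := rfl

/-- The colored counting lemma. -/
theorem abs_homDens_sub_le (W W' : Graphon) {c c' : ℝ → S} (hc : ∀ s, MeasurableSet (c ⁻¹' {s}))
    (hc' : ∀ s, MeasurableSet (c' ⁻¹' {s})) (T : Finset (Sym2 V)) (hT : ∀ e ∈ T, ¬ e.IsDiag)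
    (cT : V → S) :
    |homDens W c T cT - homDens W' c' T cT| ≤
      T.card * (cutNorm fun x y => W.W x y - W'.W x y) + Fintype.card V * colorMis c c' := by
  have h1 := abs_integral_prod_edge_sub_le W W' T hT (colorInd c cT) (measurable_colorInd hc cT)
    (colorInd_mem c cT) fun u v h => splits_colorInd hc cT fun huv =>
      hT _ h (by rw [Sym2.mk_isDiag_iff]; exact huv)
  have hprod : Measurable (fun x : V → ℝ => ∏ e ∈ T, W'.edge x e) :=
    Finset.measurable_prod _ fun e _ => W'.measurable_edge e
  have hprod01 : ∀ x : V → ℝ,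
      0 ≤ (∏ e ∈ T, W'.edge x e) ∧ (∏ e ∈ T, W'.edge x e) ≤ 1 := fun x =>
    ⟨Finset.prod_nonneg fun e _ => (W'.edge_mem x e).1,
      Finset.prod_le_one (fun e _ => (W'.edge_mem x e).1) fun e _ => (W'.edge_mem x e).2⟩
  have hint : ∀ d : ℝ → S, (∀ s, MeasurableSet (d ⁻¹' {s})) →
      Integrable (fun x : V → ℝ => (∏ e ∈ T, W'.edge x e) * colorInd d cT x) (piMu V) :=
    fun d hd => integrable_of_bdd (hprod.mul (measurable_colorInd hd cT)) 1 fun x => by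
      have := mul_mem_unit (hprod01 x) (colorInd_mem d cT x)
      rw [abs_of_nonneg this.1]; exact this.2
  have hmm := measurableSet_colorMis hc hc'
  have hfac : ∀ v : V, Measurable fun x : V → ℝ => if c (x v) ≠ c' (x v) then (1 : ℝ) else 0 :=
    fun v => (Measurable.ite hmm measurable_const measurable_const).comp (measurable_pi_apply v)
  have hfacI : ∀ v : V, Integrable
      (fun x : V → ℝ => if c (x v) ≠ c' (x v) then (1 : ℝ) else 0) (piMu V) :=
    fun v => integrable_of_bdd (hfac v) 1 fun x => by split_ifs <;> norm_num
  have h2 : |∫ x, (∏ e ∈ T, W'.edge x e) * colorInd c cT x ∂(piMu V) -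
      ∫ x, (∏ e ∈ T, W'.edge x e) * colorInd c' cT x ∂(piMu V)| ≤
      Fintype.card V * colorMis c c' := by
    rw [← integral_sub (hint c hc) (hint c' hc')]
    refine (abs_integral_le_integral_abs).trans ?_
    calc _ ≤ ∫ x, ∑ v, (if c (x v) ≠ c' (x v) then (1 : ℝ) else 0) ∂(piMu V) := by
          refine integral_mono ((hint c hc).sub (hint c' hc')).abs
            (integrable_finsetSum _ fun v _ => hfacI v) fun x => ?_
          simp only
          rw [← mul_sub, abs_mul, abs_of_nonneg (hprod01 x).1]
          exact (mul_le_of_le_one_left (abs_nonneg _) (hprod01 x).2).trans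
            (abs_colorInd_sub_le c c' cT x)
      _ = ∑ v : V, colorMis c c' := by
          rw [integral_finsetSum _ fun v _ => hfacI v]
          refine Finset.sum_congr rfl fun v _ => ?_
          rw [integral_eval v (g := fun t => if c t ≠ c' t then (1 : ℝ) else 0)
            (Measurable.ite hmm measurable_const measurable_const), colorMis,
            ← integral_indicator_one hmm]
          refine integral_congr_ae (Eventually.of_forall fun t => ?_)
          simp [indicator]
      _ = _ := by simp
  have := abs_sub_le (homDens W c T cT) (homDens W' c T cT) (homDens W' c' T cT)
  unfold homDens at *
  linarith

/-- The pull-back of a graphon under a measurable map. -/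
def Graphon.comp (W : Graphon) (σ : ℝ → ℝ) (hσ : Measurable σ) : Graphon where
  W x y := W.W (σ x) (σ y)
  measurable := W.measurable.comp (hσ.prodMap hσ)
  symm _ _ := W.symm _ _
  nonneg _ _ := W.nonneg _ _
  le_one _ _ := W.le_one _ _

theorem homDens_comp (W : Graphon) {c : ℝ → S} (hc : ∀ s, MeasurableSet (c ⁻¹' {s}))
    {σ : ℝ → ℝ} (hσ : MeasurePreserving σ mu01 mu01) (T : Finset (Sym2 V)) (cT : V → S) :
    homDens (W.comp σ hσ.measurable) (fun t => c (σ t)) T cT = homDens W c T cT := by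
  have h := measurePreserving_pi (fun _ : V => mu01) (fun _ : V => mu01) (f := fun _ => σ) fun _ => hσ
  have hm : Measurable fun x : V → ℝ => (∏ e ∈ T, W.edge x e) * colorInd c cT x :=
    (Finset.measurable_prod _ fun e _ => W.measurable_edge e).mul (measurable_colorInd hc cT)
  conv_rhs => rw [homDens, piMu, ← h.map_eq,
    integral_map h.measurable.aemeasurable hm.aestronglyMeasurable]
  rw [homDens]
  refine integral_congr_ae (Eventually.of_forall fun x => ?_)
  have he : ∀ e : Sym2 V, (W.comp σ hσ.measurable).edge x e = W.edge (fun v => σ (x v)) e :=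
    fun e => by
      induction e using Sym2.ind with
      | _ u v => rfl
  simp only [he]
  rfl

end Counting

theorem colorDist_nonneg {S : Type*} [Fintype S] (c c' : ℝ → S) : 0 ≤ colorDist c c' :=
  Finset.sum_nonneg fun _ _ => ENNReal.toReal_nonneg

theorem deltaCutS_le {S : Type*} [Fintype S] (W W' : CGraphon S) {σ : ℝ → ℝ} (hσ : IsMPB σ) :
    deltaCutS W W' ≤ cutNorm (fun x y => W.K.W x y - W'.K.W (σ x) (σ y))
        + colorDist W.c fun y => W'.c (σ y) := by
  refine csInf_le ⟨0, ?_⟩ ⟨σ, hσ, rfl⟩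
  rintro r ⟨σ, _, rfl⟩
  exact add_nonneg (cutNorm_nonneg _) (colorDist_nonneg _ _)

theorem isMPB_id : IsMPB id := ⟨measurable_id, bijOn_id _, MeasurePreserving.id _⟩

/-- The densities are Lipschitz for the colored cut distance. -/
theorem abs_tS_sub_le_of_deltaCutS_lt {S : Type} [Fintype S] [DecidableEq S] (W W' : CGraphon S)
    {V : Type} [Fintype V] [DecidableEq V] (H : SimpleGraph V) [DecidableRel H.Adj] (cH : V → S)
    {ε : ℝ} (h : deltaCutS W W' < ε) :
    |tS H cH W - tS H cH W'| ≤ (H.edgeFinset.card + Fintype.card V) * ε := by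
  obtain ⟨r, ⟨σ, hσ, rfl⟩, hr⟩ := exists_lt_of_csInf_lt (by exact ⟨_, id, isMPB_id, rfl⟩) h
  have hmp : MeasurePreserving σ mu01 mu01 := hσ.2.2
  have hcσ : ∀ s, MeasurableSet ((fun y => W'.c (σ y)) ⁻¹' {s}) := fun s =>
    hσ.1 (W'.measC s)
  rw [tS_eq, tS_eq, ← homDens_comp W'.K W'.measC hmp]
  refine (abs_homDens_sub_le W.K _ W.measC hcσ H.edgeFinset (fun e he => ?_) cH).trans ?_
  · exact H.not_isDiag_of_mem_edgeSet (SimpleGraph.mem_edgeFinset.1 he)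
  · have h1 := colorMis_le W.measC hcσ
    have h2 := cutNorm_nonneg fun x y => W.K.W x y - W'.K.W (σ x) (σ y)
    have h3 := colorDist_nonneg W.c fun y => W'.c (σ y)
    rw [add_mul]
    refine add_le_add (mul_le_mul_of_nonneg_left ?_ (by positivity))
      (mul_le_mul_of_nonneg_left ?_ (by positivity))
    · change (cutNorm fun x y => W.K.W x y - W'.K.W (σ x) (σ y)) ≤ ε
      linarith
    · linarith

theorem left_convergence_of_cauchy {S : Type} [Fintype S] [DecidableEq S] (W : ℕ → CGraphon S)
    (hW : ∀ ε : ℝ, 0 < ε → ∃ N : ℕ, ∀ m ≥ N, ∀ n ≥ N, deltaCutS (W m) (W n) < ε)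
    {V : Type} [Fintype V] [DecidableEq V] (H : SimpleGraph V) [DecidableRel H.Adj] (cH : V → S) :
    ∃ L : ℝ, Tendsto (fun n => tS H cH (W n)) atTop (nhds L) := by
  refine cauchySeq_tendsto_of_complete (Metric.cauchySeq_iff.2 fun ε hε => ?_)
  set C : ℝ := H.edgeFinset.card + Fintype.card V with hC
  have hC0 : 0 ≤ C := by positivity
  obtain ⟨N, hN⟩ := hW (ε / (C + 1)) (by positivity)
  refine ⟨N, fun m hm n hn => ?_⟩
  rw [Real.dist_eq]
  refine (abs_tS_sub_le_of_deltaCutS_lt _ _ H cH (hN m hm n hn)).trans_lt ?_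
  rw [← hC, mul_div_assoc', div_lt_iff₀ (by positivity)]
  nlinarith

/-! ### Uniform cells and interval exchanges -/

section Cells

variable {N : ℕ} [NeZero N]

/-- The index of the cell `[i/N, (i+1)/N)` containing `x`; points outside `[0,1)` are sent to
the first or last cell. -/
def cell (N : ℕ) [NeZero N] (x : ℝ) : Fin N :=
  ⟨min ⌊(N : ℝ) * x⌋₊ (N - 1), by have := NeZero.pos N; omega⟩

theorem measurable_cell : Measurable (cell N) := by
  have h : Measurable fun x : ℝ => ⌊(N : ℝ) * x⌋₊ :=
    Nat.measurable_floor.comp (measurable_const.mul measurable_id)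
  exact (measurable_from_top (f := fun n : ℕ => (⟨min n (N - 1), by
    have := NeZero.pos N; omega⟩ : Fin N))).comp h

/-- The half-open interval `[i/N, (i+1)/N)`. -/
def cellSet (N : ℕ) (i : Fin N) : Set ℝ := Ico ((i : ℝ) / N) (((i : ℝ) + 1) / N)

theorem cellSet_subset (i : Fin N) : cellSet N i ⊆ Ico 0 1 := by
  intro x hx
  have hN : (0 : ℝ) < N := by exact_mod_cast NeZero.pos N
  have hi : ((i : ℕ) : ℝ) + 1 ≤ N := by exact_mod_cast i.2
  refine ⟨le_trans (by positivity) hx.1, hx.2.trans_le ?_⟩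
  rw [div_le_one hN]; exact hi

theorem mem_cellSet_iff {x : ℝ} (hx : x ∈ Ico (0 : ℝ) 1) (i : Fin N) :
    x ∈ cellSet N i ↔ cell N x = i := by
  have hN : (0 : ℝ) < N := by exact_mod_cast NeZero.pos N
  have hlt : ⌊(N : ℝ) * x⌋₊ < N := by
    rw [Nat.floor_lt (mul_nonneg hN.le hx.1)]
    nlinarith [hx.2]
  have hcell : cell N x = i ↔ ⌊(N : ℝ) * x⌋₊ = i := by
    rw [Fin.ext_iff]
    simp only [cell]
    rw [min_eq_left (by omega)]
  rw [hcell, Nat.floor_eq_iff (mul_nonneg hN.le hx.1), cellSet, mem_Ico, div_le_iff₀ hN,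
    lt_div_iff₀ hN, mul_comm x]

theorem mem_cellSet_cell {x : ℝ} (hx : x ∈ Ico (0 : ℝ) 1) : x ∈ cellSet N (cell N x) :=
  (mem_cellSet_iff hx _).2 rfl

theorem cell_of_mem {x : ℝ} {i : Fin N} (hx : x ∈ cellSet N i) : cell N x = i :=
  (mem_cellSet_iff (cellSet_subset i hx) i).1 hx

theorem iUnion_cellSet : ⋃ i, cellSet N i = Ico (0 : ℝ) 1 := by
  apply Subset.antisymm (iUnion_subset cellSet_subset)
  intro x hx
  exact mem_iUnion.2 ⟨_, mem_cellSet_cell hx⟩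

theorem mu01_eq_Ico : mu01 = volume.restrict (Ico (0 : ℝ) 1) := by
  rw [mu01, I01]
  exact Measure.restrict_congr_set Ico_ae_eq_Icc.symm

theorem ae_mem_Ico : ∀ᵐ x ∂mu01, x ∈ Ico (0 : ℝ) 1 := by
  rw [mu01_eq_Ico]
  exact ae_restrict_mem measurableSet_Ico

theorem mu01_eq_sum (N : ℕ) [NeZero N] : mu01 = ∑ i : Fin N, volume.restrict (cellSet N i) := by
  rw [mu01_eq_Ico, ← iUnion_cellSet (N := N), Measure.restrict_iUnion, Measure.sum_fintype]
  · intro i j hij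
    rw [Function.onFun, Set.disjoint_left]
    intro x hx hx'
    exact hij ((cell_of_mem hx).symm.trans (cell_of_mem hx'))
  · exact fun i => measurableSet_Ico

theorem mu01_cell (i : Fin N) : mu01 (cell N ⁻¹' {i}) = (N : ENNReal)⁻¹ := by
  have hN : (0 : ℝ) < N := by exact_mod_cast NeZero.pos N
  rw [mu01_eq_Ico, Measure.restrict_apply (measurable_cell (measurableSet_singleton i))]
  have : cell N ⁻¹' {i} ∩ Ico 0 1 = cellSet N i := by
    ext x
    constructor
    · rintro ⟨h, hx⟩
      exact (mem_cellSet_iff hx i).2 h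
    · intro h
      exact ⟨cell_of_mem h, cellSet_subset i h⟩
  rw [this, cellSet, Real.volume_Ico, ← sub_div, add_sub_cancel_left, one_div,
    ENNReal.ofReal_inv_of_pos hN, ENNReal.ofReal_natCast]

theorem mu01_real_cell (i : Fin N) : mu01.real (cell N ⁻¹' {i}) = (N : ℝ)⁻¹ := by
  rw [measureReal_def, mu01_cell]; simp

theorem integral_cell (ν : Measure ℝ) [IsFiniteMeasure ν] (h : Fin N → ℝ) :
    ∫ y, h (cell N y) ∂ν = ∑ j, ν.real (cell N ⁻¹' {j}) * h j := by
  rw [← integral_map measurable_cell.aemeasurable (f := h)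
    (measurable_from_top.aestronglyMeasurable), integral_fintype (.of_finite)]
  refine Finset.sum_congr rfl fun j _ => ?_
  rw [map_measureReal_apply measurable_cell (measurableSet_singleton j), smul_eq_mul]

/-- The interval exchange of `[0,1]` that permutes the cells by `π`. -/
def cellPerm (π : Equiv.Perm (Fin N)) (x : ℝ) : ℝ :=
  open Classical in
  if x ∈ Ico (0 : ℝ) 1 then x + (((π (cell N x) : ℕ) : ℝ) - ((cell N x : ℕ) : ℝ)) / N else x

theorem cellPerm_of_mem (π : Equiv.Perm (Fin N)) {x : ℝ} {i : Fin N} (hx : x ∈ cellSet N i) :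
    cellPerm π x = x + (((π i : ℕ) : ℝ) - ((i : ℕ) : ℝ)) / N := by
  rw [cellPerm, if_pos (cellSet_subset i hx), cell_of_mem hx]

theorem cellPerm_mem (π : Equiv.Perm (Fin N)) {x : ℝ} {i : Fin N} (hx : x ∈ cellSet N i) :
    cellPerm π x ∈ cellSet N (π i) := by
  rw [cellPerm_of_mem π hx]
  have h1 := hx.1
  have h2 := hx.2
  constructor
  · calc ((π i : ℕ) : ℝ) / N = (i : ℕ) / N + (((π i : ℕ) : ℝ) - ((i : ℕ) : ℝ)) / N := by ring
      _ ≤ _ := by gcongr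
  · calc _ < ((i : ℕ) + 1) / N + (((π i : ℕ) : ℝ) - ((i : ℕ) : ℝ)) / N := by gcongr
      _ = _ := by ring

theorem cell_cellPerm (π : Equiv.Perm (Fin N)) {x : ℝ} (hx : x ∈ Ico (0 : ℝ) 1) :
    cell N (cellPerm π x) = π (cell N x) :=
  cell_of_mem (cellPerm_mem π (mem_cellSet_cell hx))

theorem cellPerm_symm_cellPerm (π : Equiv.Perm (Fin N)) (x : ℝ) :
    cellPerm π.symm (cellPerm π x) = x := by
  by_cases hx : x ∈ Ico (0 : ℝ) 1
  · have h := mem_cellSet_cell (N := N) hx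
    rw [cellPerm_of_mem _ (cellPerm_mem π h), cellPerm_of_mem π h, Equiv.symm_apply_apply]
    ring
  · have h : cellPerm π x = x := if_neg hx
    rw [h]; exact if_neg hx

theorem measurable_cellPerm (π : Equiv.Perm (Fin N)) : Measurable (cellPerm π) := by
  refine Measurable.ite measurableSet_Ico (measurable_id.add ?_) measurable_id
  exact (measurable_from_top (f := fun i : Fin N =>
    (((π i : ℕ) : ℝ) - ((i : ℕ) : ℝ)) / N)).comp measurable_cell

theorem cellPerm_mapsTo (π : Equiv.Perm (Fin N)) : MapsTo (cellPerm π) I01 I01 := by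
  intro x hx
  by_cases h : x ∈ Ico (0 : ℝ) 1
  · exact Ico_subset_Icc_self (cellSet_subset _ (cellPerm_mem π (mem_cellSet_cell h)))
  · rw [cellPerm, if_neg h]; exact hx

theorem map_cellPerm_cell (π : Equiv.Perm (Fin N)) (i : Fin N) :
    (volume.restrict (cellSet N i)).map (cellPerm π) = volume.restrict (cellSet N (π i)) := by
  set t : ℝ := (((π i : ℕ) : ℝ) - ((i : ℕ) : ℝ)) / N with ht
  have h1 : (volume.restrict (cellSet N i)).map (cellPerm π) =
      (volume.restrict (cellSet N i)).map fun x => x + t := by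
    refine Measure.map_congr ?_
    filter_upwards [ae_restrict_mem (s := cellSet N i) measurableSet_Ico] with x hx
    exact cellPerm_of_mem π hx
  have h2 : cellSet N i = (fun x => x + t) ⁻¹' cellSet N (π i) := by
    rw [cellSet, cellSet, Set.preimage_add_const_Ico]
    congr 1 <;> rw [ht] <;> ring
  rw [h1, h2]
  exact ((measurePreserving_add_right volume t).restrict_preimage measurableSet_Ico).map_eq

theorem isMPB_cellPerm (π : Equiv.Perm (Fin N)) : IsMPB (cellPerm π) := by
  refine ⟨measurable_cellPerm π, ?_, measurable_cellPerm π, ?_⟩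
  · refine InvOn.bijOn (f' := cellPerm π.symm) ⟨fun x _ => cellPerm_symm_cellPerm π x, fun x _ => ?_⟩
      (cellPerm_mapsTo π) (cellPerm_mapsTo π.symm)
    simpa using cellPerm_symm_cellPerm π.symm x
  · change mu01.map (cellPerm π) = mu01
    conv_lhs => rw [mu01_eq_sum N]
    conv_rhs => rw [mu01_eq_sum N]
    rw [← Measure.sum_fintype, Measure.map_sum (measurable_cellPerm π).aemeasurable,
      Measure.sum_fintype]
    simp only [map_cellPerm_cell]
    rw [Measure.sum_fintype]
    exact Equiv.sum_comp π fun i => volume.restrict (cellSet N i)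

end Cells

/-! ### Step graphons -/

section Step

variable {S : Type*} {N : ℕ} [NeZero N]

/-- The step graphon of a weighted graph. -/
def WGraph.step (G : WGraph (Fin N) S) : Graphon where
  W x y := G.w (cell N x) (cell N y)
  measurable := by
    have h : Measurable fun p : ℝ × ℝ => (cell N p.1, cell N p.2) :=
      (measurable_cell.comp measurable_fst).prodMk (measurable_cell.comp measurable_snd)
    exact (measurable_of_countable fun p : Fin N × Fin N => G.w p.1 p.2).comp h
  symm _ _ := G.symm _ _
  nonneg _ _ := G.nonneg _ _
  le_one _ _ := G.le_one _ _

/-- The coloring of `[0,1]` that is constant on cells. -/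
def WGraph.stepC (G : WGraph (Fin N) S) (x : ℝ) : S := G.c (cell N x)

theorem WGraph.measurable_stepC (G : WGraph (Fin N) S) (s : S) :
    MeasurableSet (G.stepC ⁻¹' {s}) := by
  have : G.stepC ⁻¹' {s} = cell N ⁻¹' (G.c ⁻¹' {s}) := rfl
  rw [this]
  exact measurable_cell (MeasurableSet.of_discrete)

theorem integral_pi_cell {V : Type*} [Fintype V] [DecidableEq V] (h : (V → Fin N) → ℝ) :
    ∫ x, h (fun v => cell N (x v)) ∂(piMu V) = 𝔼 z, h z := by
  have hm : Measurable fun x : V → ℝ => fun v => cell N (x v) :=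
    measurable_pi_iff.2 fun v => measurable_cell.comp (measurable_pi_apply v)
  rw [← integral_map hm.aemeasurable (f := h)
    ((measurable_of_countable h).aestronglyMeasurable), integral_fintype (.of_finite),
    Finset.expect_eq_sum_div_card, Finset.sum_div]
  refine Finset.sum_congr rfl fun z _ => ?_
  rw [map_measureReal_apply hm (measurableSet_singleton z)]
  have : (fun x : V → ℝ => fun v => cell N (x v)) ⁻¹' {z} =
      univ.pi fun v => cell N ⁻¹' {z v} := by
    ext x; simp [funext_iff]
  rw [this, measureReal_def, piMu, Measure.pi_pi]
  simp only [mu01_cell, Finset.prod_const, Finset.card_univ, smul_eq_mul, ENNReal.toReal_pow,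
    ENNReal.toReal_inv, ENNReal.toReal_natCast, Fintype.card_fun, Fintype.card_fin, Nat.cast_pow,
    inv_pow]
  rw [div_eq_inv_mul]

theorem homDens_step [Fintype S] [DecidableEq S] {V : Type*} [Fintype V] [DecidableEq V]
    (G : WGraph (Fin N) S) (T : Finset (Sym2 V)) (cT : V → S) :
    homDens G.step G.stepC T cT = G.hom T cT := by
  rw [WGraph.hom, ← integral_pi_cell, homDens]
  refine integral_congr_ae (Eventually.of_forall fun x => ?_)
  have he : ∀ e : Sym2 V, G.step.edge x e = G.edge (fun v => cell N (x v)) e := fun e => by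
    induction e using Sym2.ind with
    | _ u v => rfl
  simp only [he]
  rfl

/-- The masses that measurable sets put on the cells, multiplied by `N`, are admissible test vectors
for `CutLe`. -/
theorem cutNorm_step_le {A : Fin N → Fin N → ℝ} {ε : ℝ} (hA : CutLe A ε) :
    cutNorm (fun x y => A (cell N x) (cell N y)) ≤ ε := by
  have hN : (0 : ℝ) < N := by exact_mod_cast NeZero.pos N
  refine cutNorm_le fun P Q hP hQ => ?_
  simp only [integral_cell]
  rw [integral_cell (mu01.restrict P)
    (fun i => ∑ j, (mu01.restrict Q).real (cell N ⁻¹' {j}) * A i j)]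
  have hle : ∀ (Q : Set ℝ) (j : Fin N),
      |(N : ℝ) * (mu01.restrict Q).real (cell N ⁻¹' {j})| ≤ 1 := fun Q j => by
    rw [abs_of_nonneg (by positivity)]
    have h1 : (mu01.restrict Q).real (cell N ⁻¹' {j}) ≤ mu01.real (cell N ⁻¹' {j}) :=
      ENNReal.toReal_mono (measure_ne_top _ _) (Measure.restrict_le_self _)
    rw [mu01_real_cell] at h1
    calc _ ≤ (N : ℝ) * (N : ℝ)⁻¹ := by gcongr
      _ = 1 := mul_inv_cancel₀ hN.ne'
  have h := hA _ _ (hle P) (hle Q)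
  rw [Fintype.card_fin] at h
  have e : ∑ i, ∑ j, (N : ℝ) * (mu01.restrict P).real (cell N ⁻¹' {i}) *
      ((N : ℝ) * (mu01.restrict Q).real (cell N ⁻¹' {j})) * A i j =
      (N : ℝ) ^ 2 * ∑ i, (mu01.restrict P).real (cell N ⁻¹' {i}) *
        ∑ j, (mu01.restrict Q).real (cell N ⁻¹' {j}) * A i j := by
    simp only [Finset.mul_sum]
    refine Finset.sum_congr rfl fun i _ => Finset.sum_congr rfl fun j _ => ?_
    ring
  rw [e, abs_mul, abs_of_nonneg (by positivity), mul_comm] at h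
  exact le_of_mul_le_mul_right h (by positivity)

end Step

/-! ### Approximation by step graphons -/

section L1

/-- The `L¹` norm of a kernel on the unit square. -/
def l1 (f : ℝ → ℝ → ℝ) : ℝ := ∫ p, |f p.1 p.2| ∂(mu01.prod mu01)

theorem abs_setIntegral_le_l1 {f : ℝ → ℝ → ℝ} (hf : Measurable (Function.uncurry f)) {C : ℝ}
    (hC : ∀ x y, |f x y| ≤ C) (A B : Set ℝ) :
    |∫ x in A, ∫ y in B, f x y ∂mu01 ∂mu01| ≤ l1 f := by
  have hi : ∀ ν : Measure (ℝ × ℝ), IsFiniteMeasure ν → Integrable (Function.uncurry f) ν :=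
    fun ν _ => integrable_of_bdd hf C fun p => hC p.1 p.2
  have h1 : ∫ x in A, ∫ y in B, f x y ∂mu01 ∂mu01 =
      ∫ p, Function.uncurry f p ∂((mu01.restrict A).prod (mu01.restrict B)) :=
    (integral_prod (Function.uncurry f) (hi _ inferInstance)).symm
  rw [h1, Measure.prod_restrict]
  refine abs_integral_le_integral_abs.trans ?_
  exact setIntegral_le_integral (hi _ inferInstance).abs (Eventually.of_forall fun p => abs_nonneg _)

theorem cutNorm_le_l1 {f : ℝ → ℝ → ℝ} (hf : Measurable (Function.uncurry f)) {C : ℝ}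
    (hC : ∀ x y, |f x y| ≤ C) : cutNorm f ≤ l1 f :=
  cutNorm_le fun A B _ _ => abs_setIntegral_le_l1 hf hC A B

theorem cutNorm_add_le {f g : ℝ → ℝ → ℝ} (hf : Measurable (Function.uncurry f))
    (hg : Measurable (Function.uncurry g)) {C : ℝ} (h0 : 0 ≤ C) (hC : ∀ x y, |f x y| ≤ C)
    (hC' : ∀ x y, |g x y| ≤ C) :
    cutNorm (fun x y => f x y + g x y) ≤ cutNorm f + cutNorm g := by
  refine cutNorm_le fun A B hA hB => ?_
  have e : ∫ x in A, ∫ y in B, f x y + g x y ∂mu01 ∂mu01 =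
      ∫ x in A, ∫ y in B, f x y ∂mu01 ∂mu01 + ∫ x in A, ∫ y in B, g x y ∂mu01 ∂mu01 := by
    rw [← integral_add]
    · refine integral_congr_ae (Eventually.of_forall fun x => ?_)
      exact integral_add
        (integrable_of_bdd (hf.comp measurable_prodMk_left) C fun y => hC x y)
        (integrable_of_bdd (hg.comp measurable_prodMk_left) C fun y => hC' x y)
    · exact integrable_of_bdd (measurable_section_integral hf) C fun x =>
        abs_integral_le_of_bdd' Measure.restrict_le_self h0 (hC x)
    · exact integrable_of_bdd (measurable_section_integral hg) C fun x =>
        abs_integral_le_of_bdd' Measure.restrict_le_self h0 (hC' x)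
  rw [e]
  exact (abs_add_le _ _).trans (add_le_add (le_cutNorm h0 hC hA hB) (le_cutNorm h0 hC' hA hB))

end L1

section Approx

theorem abs_clamp_sub_le {w t : ℝ} (h0 : 0 ≤ w) (h1 : w ≤ 1) : |w - max 0 (min 1 t)| ≤ |w - t| := by
  rcases le_total t 0 with h | h
  · rw [min_eq_right (by linarith), max_eq_left h, abs_of_nonneg (by linarith),
      abs_of_nonneg (by linarith)]; linarith
  · rcases le_total t 1 with h' | h'
    · rw [min_eq_right h', max_eq_right h]
    · rw [min_eq_left h', max_eq_right (by norm_num), abs_of_nonpos (by linarith),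
        abs_of_nonpos (by linarith)]; linarith

theorem dist_node_lt {N : ℕ} [NeZero N] {δ : ℝ} (hN : 1 / δ < N) (hδ : 0 < δ) {x : ℝ}
    (hx : x ∈ Ico (0 : ℝ) 1) : dist x (((cell N x : ℕ) : ℝ) / N) < δ := by
  have hN0 : (0 : ℝ) < N := by exact_mod_cast NeZero.pos N
  have h := mem_cellSet_cell (N := N) hx
  rw [Real.dist_eq, abs_of_nonneg (sub_nonneg.2 h.1)]
  have h2 := h.2
  rw [add_div] at h2
  have : 1 / (N : ℝ) < δ := by rwa [div_lt_comm₀ hN0 hδ]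
  linarith

/-- Graphons are approximated in `L¹` by step functions on all sufficiently fine grids. -/
theorem exists_step_kernel (W : Graphon) {η : ℝ} (hη : 0 < η) :
    ∃ N₀ : ℕ, ∀ N : ℕ, N₀ ≤ N → ∀ [NeZero N], ∃ w : Fin N → Fin N → ℝ,
      (∀ i j, w i j = w j i) ∧ (∀ i j, 0 ≤ w i j) ∧ (∀ i j, w i j ≤ 1) ∧
      l1 (fun x y => W.W x y - w (cell N x) (cell N y)) ≤ η := by
  have hWi : Integrable (Function.uncurry W.W) (mu01.prod mu01) :=
    integrable_of_bdd W.measurable 1 fun p => by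
      rw [Function.uncurry, abs_of_nonneg (W.nonneg _ _)]; exact W.le_one _ _
  obtain ⟨g, hgc, hg1, hg2, hg3⟩ := hWi.exists_hasCompactSupport_integral_sub_le (half_pos hη)
  have huc := hg2.uniformContinuous_of_tendsto_cocompact (hgc.is_zero_at_infty)
  obtain ⟨δ, hδ, huc⟩ := Metric.uniformContinuous_iff.1 huc (η / 2) (half_pos hη)
  obtain ⟨N₀, hN₀⟩ := exists_nat_gt (1 / δ)
  refine ⟨N₀, fun N hN _ => ?_⟩
  have hN' : 1 / δ < N := hN₀.trans_le (by exact_mod_cast hN)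
  -- sample `g` at the left end points `q i`; symmetrising and clamping do not increase the error
  set q : Fin N → ℝ := fun i => ((i : ℕ) : ℝ) / N with hq
  set w : Fin N → Fin N → ℝ := fun i j => max 0 (min 1 ((g (q i, q j) + g (q j, q i)) / 2)) with hw
  refine ⟨w, fun i j => by simp only [hw]; rw [add_comm], fun i j => le_max_left _ _,
    fun i j => max_le zero_le_one (min_le_left _ _), ?_⟩
  have hgi : Integrable (fun p : ℝ × ℝ => |Function.uncurry W.W p - g p|) (mu01.prod mu01) :=
    (hWi.sub hg3).abs
  have hgs : Integrable (fun p : ℝ × ℝ => |Function.uncurry W.W p.swap - g p.swap|)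
      (mu01.prod mu01) := hgi.swap
  have hsw : ∫ p : ℝ × ℝ, |Function.uncurry W.W p.swap - g p.swap| ∂(mu01.prod mu01) =
      ∫ p, |Function.uncurry W.W p - g p| ∂(mu01.prod mu01) :=
    integral_prod_swap fun p => |Function.uncurry W.W p - g p|
  have hae : ∀ᵐ p ∂(mu01.prod mu01), p.1 ∈ Ico (0 : ℝ) 1 ∧ p.2 ∈ Ico (0 : ℝ) 1 :=
    (Measure.quasiMeasurePreserving_fst.ae ae_mem_Ico).and
      (Measure.quasiMeasurePreserving_snd.ae ae_mem_Ico)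
  calc l1 (fun x y => W.W x y - w (cell N x) (cell N y))
      ≤ ∫ p : ℝ × ℝ, (1 / 2 * |Function.uncurry W.W p - g p| +
          1 / 2 * |Function.uncurry W.W p.swap - g p.swap| + η / 2) ∂(mu01.prod mu01) := by
        refine integral_mono_of_nonneg (Eventually.of_forall fun p => abs_nonneg _)
          (((hgi.const_mul _).add (hgs.const_mul _)).add (integrable_const _)) ?_
        filter_upwards [hae] with p hp
        obtain ⟨x, y⟩ := p
        have hx := dist_node_lt hN' hδ hp.1
        have hy := dist_node_lt hN' hδ hp.2
        have h1 : |g (x, y) - g (q (cell N x), q (cell N y))| < η / 2 := by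
          have := huc (a := (x, y)) (b := (q (cell N x), q (cell N y)))
            (by rw [Prod.dist_eq]; exact max_lt hx hy)
          rwa [Real.dist_eq] at this
        have h2 : |g (y, x) - g (q (cell N y), q (cell N x))| < η / 2 := by
          have := huc (a := (y, x)) (b := (q (cell N y), q (cell N x)))
            (by rw [Prod.dist_eq]; exact max_lt hy hx)
          rwa [Real.dist_eq] at this
        simp only [Function.uncurry, Prod.swap]
        refine (abs_clamp_sub_le (W.nonneg _ _) (W.le_one _ _)).trans ?_
        rw [W.symm y x]
        have e : W.W x y - (g (q (cell N x), q (cell N y)) + g (q (cell N y), q (cell N x))) / 2 =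
          1 / 2 * (W.W x y - g (x, y)) + 1 / 2 * (W.W x y - g (y, x)) +
          (1 / 2 * (g (x, y) - g (q (cell N x), q (cell N y))) +
            1 / 2 * (g (y, x) - g (q (cell N y), q (cell N x)))) := by ring
        rw [e]
        refine (abs_add_le _ _).trans (add_le_add ((abs_add_le _ _).trans ?_)
          ((abs_add_le _ _).trans ?_))
        · simp [abs_mul]
        · simp only [abs_mul]; norm_num; linarith
    _ = 1 / 2 * ∫ p, |Function.uncurry W.W p - g p| ∂(mu01.prod mu01) +
        1 / 2 * ∫ p, |Function.uncurry W.W p - g p| ∂(mu01.prod mu01) + η / 2 := by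
        have hadd : Integrable (fun p : ℝ × ℝ => 1 / 2 * |Function.uncurry W.W p - g p| +
            1 / 2 * |Function.uncurry W.W p.swap - g p.swap|) (mu01.prod mu01) :=
          (hgi.const_mul _).add (hgs.const_mul _)
        rw [integral_add hadd (integrable_const _),
          integral_add (hgi.const_mul _) (hgs.const_mul _), integral_const_mul,
          integral_const_mul, hsw]
        simp
    _ ≤ η := by
        simp only [Real.norm_eq_abs] at hg1
        linarith

/-- Colorings of `[0,1]` are approximated in measure by colorings constant on the cells of any
sufficiently fine grid. -/
theorem exists_step_coloring {S : Type*} [Fintype S] [DecidableEq S] {c : ℝ → S}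
    (hc : ∀ s, MeasurableSet (c ⁻¹' {s})) {η : ℝ} (hη : 0 < η) :
    ∃ N₀ : ℕ, ∀ N : ℕ, N₀ ≤ N → ∀ [NeZero N], ∃ d : Fin N → S,
      colorMis c (fun x => d (cell N x)) ≤ η := by
  have : Nonempty S := ⟨c 0⟩
  have hS : (0 : ℝ) < Fintype.card S := by exact_mod_cast Fintype.card_pos
  set θ : ℝ := η / (2 * Fintype.card S) with hθ
  have hθ0 : 0 < θ := by positivity
  set f : S → ℝ → ℝ := fun s t => if c t = s then 1 else 0 with hf
  have hfi : ∀ s, Integrable (f s) mu01 := fun s =>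
    integrable_of_bdd (measurable_colorFactor hc s) 1 fun t => by
      simp only [hf]; split_ifs <;> norm_num
  have hreg : mu01.Regular := inferInstance
  choose g hgc hg1 hg2 hg3 using fun s => (hfi s).exists_hasCompactSupport_integral_sub_le hθ0
  have huc := fun s => (hg2 s).uniformContinuous_of_tendsto_cocompact ((hgc s).is_zero_at_infty)
  choose δ hδ huc using fun s => Metric.uniformContinuous_iff.1 (huc s) θ hθ0
  choose M hM using fun s => exists_nat_gt (1 / δ s)
  refine ⟨∑ s, M s, fun N hN _ => ?_⟩
  have hN' : ∀ s, 1 / δ s < N := fun s => (hM s).trans_le (by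
    exact_mod_cast (Finset.single_le_sum (fun _ _ => Nat.zero_le _) (Finset.mem_univ s)).trans hN)
  -- on each cell take the color whose smoothed indicator is largest at the left end point
  choose d hd using fun i : Fin N => Finite.exists_max fun s => g s (((i : ℕ) : ℝ) / N)
  refine ⟨d, ?_⟩
  have hdm : ∀ s, MeasurableSet ((fun x => d (cell N x)) ⁻¹' {s}) := fun s =>
    measurable_cell (t := d ⁻¹' {s}) MeasurableSet.of_discrete
  have hgi : ∀ s, Integrable (fun t => |f s t - g s t|) mu01 := fun s => ((hfi s).sub (hg3 s)).abs
  rw [colorMis, ← integral_indicator_one (measurableSet_colorMis hc hdm)]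
  calc _ ≤ ∫ t, ∑ s, (|f s t - g s t| + θ) ∂mu01 := by
        refine integral_mono_of_nonneg
          (Eventually.of_forall fun t => indicator_nonneg (fun _ _ => zero_le_one) _)
          (integrable_finsetSum _ fun s _ => (hgi s).add (integrable_const _)) ?_
        filter_upwards [ae_mem_Ico] with t ht
        by_cases h : c t = d (cell N t)
        · simp only [indicator, mem_ofPred_eq, h, ne_eq, not_true_eq_false, if_false]
          positivity
        · have hs : ∀ s, |f s t - g s (((cell N t : ℕ) : ℝ) / N)| ≤ |f s t - g s t| + θ := by
            intro s
            have h1 := huc s (dist_node_lt (hN' s) (hδ s) ht)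
            rw [Real.dist_eq] at h1
            have := abs_sub_le (f s t) (g s t) (g s (((cell N t : ℕ) : ℝ) / N))
            linarith
          refine le_trans ?_ (Finset.sum_le_sum fun s _ => hs s)
          have h2 : ∑ s ∈ {c t, d (cell N t)}, |f s t - g s (((cell N t : ℕ) : ℝ) / N)| ≤
              ∑ s, |f s t - g s (((cell N t : ℕ) : ℝ) / N)| :=
            Finset.sum_le_sum_of_subset_of_nonneg (Finset.subset_univ _) fun _ _ _ => abs_nonneg _
          refine le_trans ?_ h2
          -- the smoothed indicator of the chosen color is at least that of the true color, so the
          -- errors in these two colors add up to at least `1`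
          rw [Finset.sum_pair h]
          have h3 := hd (cell N t) (c t)
          have h4 := le_abs_self (f (c t) t - g (c t) (((cell N t : ℕ) : ℝ) / N))
          have h5 := neg_le_abs
            (f (d (cell N t)) t - g (d (cell N t)) (((cell N t : ℕ) : ℝ) / N))
          have h6 : f (c t) t = 1 := by simp [hf]
          have h7 : f (d (cell N t)) t = 0 := by simp [hf, h]
          simp only [indicator, mem_ofPred_eq, ne_eq, h, not_false_eq_true, if_true, Pi.one_apply]
          rw [h6] at h4 ⊢
          rw [h7] at h5 ⊢
          linarith
    _ ≤ ∑ _s : S, (θ + θ) := by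
        have hadd : ∀ s, Integrable (fun t => |f s t - g s t| + θ) mu01 := fun s =>
          (hgi s).add (integrable_const _)
        rw [integral_finsetSum _ fun s _ => hadd s]
        refine Finset.sum_le_sum fun s _ => ?_
        rw [integral_add (hgi s) (integrable_const _)]
        have := hg1 s
        simp only [Real.norm_eq_abs] at this
        simpa using this
    _ = η := by
        rw [Finset.sum_const, Finset.card_univ, nsmul_eq_mul, hθ]
        field_simp
        ring

theorem exists_step {S : Type*} [Fintype S] [DecidableEq S] (W : CGraphon S) {η : ℝ}
    (hη : 0 < η) :
    ∃ N₀ : ℕ, ∀ N : ℕ, N₀ ≤ N → ∀ [NeZero N], ∃ G : WGraph (Fin N) S,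
      l1 (fun x y => W.K.W x y - G.step.W x y) ≤ η ∧ colorMis W.c G.stepC ≤ η := by
  obtain ⟨N₁, h₁⟩ := exists_step_kernel W.K hη
  obtain ⟨N₂, h₂⟩ := exists_step_coloring W.measC hη
  refine ⟨max N₁ N₂, fun N hN _ => ?_⟩
  obtain ⟨w, hw1, hw2, hw3, hw4⟩ := h₁ N ((le_max_left _ _).trans hN)
  obtain ⟨d, hd⟩ := h₂ N ((le_max_right _ _).trans hN)
  exact ⟨⟨w, hw1, hw2, hw3, d⟩, hw4, hd⟩

end Approx

/-! ### From left-convergence to the Cauchy property -/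

section Hard

set_option linter.unusedSectionVars false

variable {S : Type} [Fintype S] [DecidableEq S]

/-- If two colored graphons are close to step graphons whose weighted graphs match up to a
permutation, then they are close in the colored cut distance. The factor `3` is `1` for the cut norm
plus `2` for the color part, where each disagreement is counted twice. -/
theorem deltaCutS_le_of_step {N : ℕ} [NeZero N] (W W' : CGraphon S) (G G' : WGraph (Fin N) S)
    {ε η : ℝ} (h1 : l1 (fun x y => W.K.W x y - G.step.W x y) ≤ η) (h2 : colorMis W.c G.stepC ≤ η)
    (h1' : l1 (fun x y => W'.K.W x y - G'.step.W x y) ≤ η) (h2' : colorMis W'.c G'.stepC ≤ η)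
    (π : Equiv.Perm (Fin N)) (hπ : CutLe (fun i j => G.w i j - G'.w (π i) (π j)) ε)
    (hπc : ((Finset.univ.filter fun i => G.c i ≠ G'.c (π i)).card : ℝ) ≤ ε * N) :
    deltaCutS W W' ≤ 3 * (ε + 2 * η) := by
  have hN : (0 : ℝ) < N := by exact_mod_cast NeZero.pos N
  set σ := cellPerm π with hσ
  have hmpb : IsMPB σ := isMPB_cellPerm π
  have hmp : MeasurePreserving σ mu01 mu01 := hmpb.2.2
  have hmp2 : MeasurePreserving (Prod.map σ σ) (mu01.prod mu01) (mu01.prod mu01) := hmp.prod hmp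
  have hcell : ∀ᵐ x ∂mu01, cell N (σ x) = π (cell N x) := by
    filter_upwards [ae_mem_Ico] with x hx using cell_cellPerm π hx
  refine (deltaCutS_le W W' hmpb).trans ?_
  have hcut : cutNorm (fun x y => W.K.W x y - W'.K.W (σ x) (σ y)) ≤ ε + 2 * η := by
    set D : ℝ → ℝ → ℝ := fun x y => G.w (cell N x) (cell N y) -
      G'.w (π (cell N x)) (π (cell N y)) with hD
    set R : ℝ → ℝ → ℝ := fun x y => (W.K.W x y - W'.K.W (σ x) (σ y)) - D x y with hR
    have hDm : Measurable (Function.uncurry D) := by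
      have h : Measurable fun p : ℝ × ℝ => (cell N p.1, cell N p.2) :=
        (measurable_cell.comp measurable_fst).prodMk (measurable_cell.comp measurable_snd)
      exact (measurable_of_countable fun p : Fin N × Fin N =>
        G.w p.1 p.2 - G'.w (π p.1) (π p.2)).comp h
    have hf1 : ∀ x y, |W.K.W x y - W'.K.W (σ x) (σ y)| ≤ 1 :=
      W.K.abs_sub_le (W'.K.comp σ hmp.measurable)
    have hRm : Measurable (Function.uncurry R) :=
      (W.K.measurable_sub (W'.K.comp σ hmp.measurable)).sub hDm
    have hD1 : ∀ x y, |D x y| ≤ 1 := fun x y => by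
      have a1 := G.nonneg (cell N x) (cell N y)
      have a2 := G.le_one (cell N x) (cell N y)
      have a3 := G'.nonneg (π (cell N x)) (π (cell N y))
      have a4 := G'.le_one (π (cell N x)) (π (cell N y))
      rw [abs_le]; constructor <;> simp only [hD] <;> linarith
    have hR2 : ∀ x y, |R x y| ≤ 2 := fun x y =>
      (abs_sub _ _).trans (by linarith [hf1 x y, hD1 x y])
    have e : (fun x y => W.K.W x y - W'.K.W (σ x) (σ y)) = fun x y => D x y + R x y := by
      funext x y; simp only [hR]; ring
    rw [e]
    refine (cutNorm_add_le hDm hRm zero_le_two (fun x y => (hD1 x y).trans one_le_two)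
      hR2).trans ?_
    refine add_le_add (cutNorm_step_le hπ) ((cutNorm_le_l1 hRm hR2).trans ?_)
    have hU : Integrable (fun p : ℝ × ℝ => |W.K.W p.1 p.2 - G.step.W p.1 p.2|)
        (mu01.prod mu01) :=
      (integrable_of_bdd (W.K.measurable_sub G.step) 1 fun p =>
        W.K.abs_sub_le G.step p.1 p.2).abs
    have hU'm : Measurable (fun p : ℝ × ℝ => |W'.K.W p.1 p.2 - G'.step.W p.1 p.2|) :=
      (W'.K.measurable_sub G'.step).abs
    have hU' : Integrable (fun p : ℝ × ℝ => |W'.K.W p.1 p.2 - G'.step.W p.1 p.2|)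
        (mu01.prod mu01) :=
      (integrable_of_bdd (W'.K.measurable_sub G'.step) 1 fun p =>
        W'.K.abs_sub_le G'.step p.1 p.2).abs
    have hU'σ : Integrable (fun p : ℝ × ℝ =>
        |W'.K.W (σ p.1) (σ p.2) - G'.step.W (σ p.1) (σ p.2)|) (mu01.prod mu01) :=
      hmp2.integrable_comp_of_integrable hU'
    have hσint : ∫ p : ℝ × ℝ, |W'.K.W (σ p.1) (σ p.2) - G'.step.W (σ p.1) (σ p.2)|
        ∂(mu01.prod mu01) = l1 fun x y => W'.K.W x y - G'.step.W x y := by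
      rw [l1]
      conv_rhs => rw [← hmp2.map_eq,
        integral_map hmp2.measurable.aemeasurable hU'm.aestronglyMeasurable]
      rfl
    have hae : ∀ᵐ p ∂(mu01.prod mu01), cell N (σ p.1) = π (cell N p.1) ∧
        cell N (σ p.2) = π (cell N p.2) :=
      (Measure.quasiMeasurePreserving_fst.ae hcell).and
        (Measure.quasiMeasurePreserving_snd.ae hcell)
    calc l1 R ≤ ∫ p : ℝ × ℝ, (|W.K.W p.1 p.2 - G.step.W p.1 p.2| +
          |W'.K.W (σ p.1) (σ p.2) - G'.step.W (σ p.1) (σ p.2)|) ∂(mu01.prod mu01) := by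
          refine integral_mono_of_nonneg (Eventually.of_forall fun p => abs_nonneg _)
            (hU.add hU'σ) ?_
          filter_upwards [hae] with p hp
          have e : R p.1 p.2 = (W.K.W p.1 p.2 - G.step.W p.1 p.2) -
              (W'.K.W (σ p.1) (σ p.2) - G'.step.W (σ p.1) (σ p.2)) := by
            simp only [hR, hD, WGraph.step, hp.1, hp.2]; ring
          rw [e]
          exact abs_sub _ _
      _ = l1 (fun x y => W.K.W x y - G.step.W x y) + l1 fun x y => W'.K.W x y - G'.step.W x y := by
          rw [integral_add hU hU'σ, hσint]; rfl
      _ ≤ 2 * η := by linarith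
  have hcσ : ∀ s, MeasurableSet ((fun y => W'.c (σ y)) ⁻¹' {s}) := fun s => hmpb.1 (W'.measC s)
  have hcol : colorMis W.c (fun y => W'.c (σ y)) ≤ ε + 2 * η := by
    set B : Finset (Fin N) := Finset.univ.filter fun i => G.c i ≠ G'.c (π i) with hB
    set P : Set ℝ := {t | W.c t ≠ G.stepC t}
    set Q : Set ℝ := σ ⁻¹' {t | W'.c t ≠ G'.stepC t}
    set E : Set ℝ := ⋃ i ∈ B, cell N ⁻¹' {i}
    have hE : mu01.real E ≤ ε := by
      refine (measureReal_biUnion_finset_le _ _).trans ?_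
      simp only [mu01_real_cell, Finset.sum_const, nsmul_eq_mul]
      rw [← div_eq_mul_inv, div_le_iff₀ hN]
      exact hπc
    have hQ : mu01.real Q ≤ η := by
      have : mu01.real Q = mu01.real {t | W'.c t ≠ G'.stepC t} := by
        rw [measureReal_def, measureReal_def, hmp.measure_preimage
          (measurableSet_colorMis W'.measC G'.measurable_stepC).nullMeasurableSet]
      rw [this]; exact h2'
    have hsub : mu01 {t | W.c t ≠ W'.c (σ t)} ≤ mu01 (P ∪ (E ∪ Q)) := by
      refine measure_mono_ae ?_
      filter_upwards [hcell] with t ht hmem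
      by_contra hcon
      have hcon' : t ∉ P ∧ t ∉ E ∧ t ∉ Q :=
        ⟨fun h => hcon (Or.inl h), fun h => hcon (Or.inr (Or.inl h)),
          fun h => hcon (Or.inr (Or.inr h))⟩
      obtain ⟨c1, c2, c3⟩ := hcon'
      have d1 : W.c t = G.c (cell N t) := by
        by_contra h; exact c1 h
      have d2 : G.c (cell N t) = G'.c (π (cell N t)) := by
        by_contra h
        refine c2 (mem_iUnion₂.2 ⟨cell N t, ?_, rfl⟩)
        rw [hB, Finset.mem_filter]
        exact ⟨Finset.mem_univ _, h⟩
      have d3 : W'.c (σ t) = G'.c (cell N (σ t)) := by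
        by_contra h; exact c3 h
      exact hmem (by rw [d1, d2, d3, ht])
    have h3 : colorMis W.c (fun y => W'.c (σ y)) ≤ mu01.real (P ∪ (E ∪ Q)) :=
      ENNReal.toReal_mono (measure_ne_top _ _) hsub
    have h4 := measureReal_union_le (μ := mu01) P (E ∪ Q)
    have h5 := measureReal_union_le (μ := mu01) E Q
    have h6 : mu01.real P ≤ η := h2
    linarith
  have := colorDist_le W.measC hcσ
  linarith

/-- Every set of non-loop pairs is the edge set of a simple graph, so left-convergence applies
to its density. -/
theorem cauchySeq_homDens {k : ℕ} {T : Finset (Sym2 (Fin k))} (hT : T ⊆ allEdges (Fin k))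
    (cT : Fin k → S) (W : ℕ → CGraphon S)
    (hW : ∀ (V : Type) [Fintype V] [DecidableEq V]
        (H : SimpleGraph V) [DecidableRel H.Adj] (cH : V → S),
        ∃ L : ℝ, Tendsto (fun n => tS H cH (W n)) atTop (nhds L)) :
    CauchySeq fun n => homDens (W n).K (W n).c T cT := by
  classical
  obtain ⟨L, hL⟩ := hW (Fin k) (SimpleGraph.fromEdgeSet (T : Set (Sym2 (Fin k)))) cT
  have he : ∀ _ : Fintype (SimpleGraph.fromEdgeSet (T : Set (Sym2 (Fin k)))).edgeSet,
      (SimpleGraph.fromEdgeSet (T : Set (Sym2 (Fin k)))).edgeFinset = T := by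
    intro _
    ext e
    rw [SimpleGraph.mem_edgeFinset, SimpleGraph.edgeSet_fromEdgeSet]
    constructor
    · exact fun h => h.1
    · intro h
      refine ⟨h, ?_⟩
      have := hT h
      rw [allEdges, Finset.mem_filter] at this
      exact this.2
  have h := hL.cauchySeq
  simp only [tS_eq, he] at h
  exact h

theorem cauchy_of_left_convergence (W : ℕ → CGraphon S)
    (hW : ∀ (V : Type) [Fintype V] [DecidableEq V]
        (H : SimpleGraph V) [DecidableRel H.Adj] (cH : V → S),
        ∃ L : ℝ, Tendsto (fun n => tS H cH (W n)) atTop (nhds L)) {ε : ℝ} (hε : 0 < ε) :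
    ∃ N : ℕ, ∀ m ≥ N, ∀ n ≥ N, deltaCutS (W m) (W n) < ε := by
  classical
  obtain ⟨k, hk, δ, hδ, hfin⟩ := finite_inverse_counting S (ε := ε / 12) (by positivity)
  -- a common index from which all the finitely many densities on `Fin k` vary by at most `δ / 2`
  have hN : ∀ p : Finset (Sym2 (Fin k)) × (Fin k → S), ∃ N, p.1 ⊆ allEdges (Fin k) →
      ∀ m ≥ N, ∀ n ≥ N, |homDens (W m).K (W m).c p.1 p.2 - homDens (W n).K (W n).c p.1 p.2| <
        δ / 2 := by
    rintro ⟨T, cT⟩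
    by_cases hT : T ⊆ allEdges (Fin k)
    · obtain ⟨N, hN⟩ := Metric.cauchySeq_iff.1 (cauchySeq_homDens hT cT W hW) (δ / 2)
        (half_pos hδ)
      exact ⟨N, fun _ m hm n hn => by simpa only [Real.dist_eq] using hN m hm n hn⟩
    · exact ⟨0, fun h => absurd h hT⟩
  choose N hN using hN
  refine ⟨Finset.univ.sup N, fun m hm n hn => ?_⟩
  -- the counting lemma then costs at most `(#edges + k) * η ≤ δ / 4` for each graphon
  set C : ℝ := (allEdges (Fin k)).card + k with hC
  have hC0 : 0 ≤ C := by positivity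
  set η : ℝ := min (ε / 24) (δ / (4 * (C + 1))) with hη
  have hη0 : 0 < η := lt_min (by positivity) (by positivity)
  have hCη : C * η ≤ δ / 4 := by
    have h1 : η ≤ δ / (4 * (C + 1)) := min_le_right _ _
    rw [le_div_iff₀ (by positivity)] at h1
    nlinarith
  obtain ⟨M₁, hM₁⟩ := exists_step (W m) hη0
  obtain ⟨M₂, hM₂⟩ := exists_step (W n) hη0
  set r : ℕ := M₁ + M₂ + 1 with hr
  have hkr : M₁ + M₂ ≤ k * r := by nlinarith
  have : NeZero (k * r) := ⟨by positivity⟩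
  obtain ⟨G, hG, hGc⟩ := hM₁ (k * r) (by omega)
  obtain ⟨G', hG', hGc'⟩ := hM₂ (k * r) (by omega)
  have hcount : ∀ (U : CGraphon S) (F : WGraph (Fin (k * r)) S),
      l1 (fun x y => U.K.W x y - F.step.W x y) ≤ η → colorMis U.c F.stepC ≤ η →
      ∀ T ⊆ allEdges (Fin k), ∀ cT, |homDens U.K U.c T cT - F.hom T cT| ≤ δ / 4 := by
    intro U F hF hFc T hT cT
    rw [← homDens_step]
    refine (abs_homDens_sub_le U.K F.step U.measC F.measurable_stepC T (fun e he => ?_) cT).trans ?_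
    · have := hT he
      rw [allEdges, Finset.mem_filter] at this
      exact this.2
    · have hcut := (cutNorm_le_l1 (U.K.measurable_sub F.step) (U.K.abs_sub_le F.step)).trans hF
      have hcard : (T.card : ℝ) ≤ (allEdges (Fin k)).card := by
        exact_mod_cast Finset.card_le_card hT
      rw [Fintype.card_fin]
      calc _ ≤ (T.card : ℝ) * η + k * η := by gcongr
        _ ≤ (allEdges (Fin k)).card * η + k * η := by gcongr
        _ = C * η := by rw [hC]; ring
        _ ≤ δ / 4 := hCη
  obtain ⟨π, hπ, hπc⟩ := hfin r (by omega) G G' fun T hT cT => by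
    have a1 := hcount (W m) G hG hGc T hT cT
    have a2 := hcount (W n) G' hG' hGc' T hT cT
    have a3 := hN (T, cT) hT m ((Finset.le_sup (Finset.mem_univ _)).trans hm) n
      ((Finset.le_sup (Finset.mem_univ _)).trans hn)
    rw [abs_le] at a1 a2 ⊢
    rw [abs_lt] at a3
    constructor <;> linarith [a1.1, a1.2, a2.1, a2.2, a3.1, a3.2]
  have h := deltaCutS_le_of_step (W m) (W n) G G' hG hGc hG' hGc' π hπ hπc
  have h2 : η ≤ ε / 24 := min_le_left _ _
  linarith

end Hard

/-- **Left-convergence is equivalent to being Cauchy in the colored cut distance.**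
A sequence of `S`-colored graphons left-converges (all colored homomorphism densities
converge) if and only if it is a Cauchy sequence for `δ_□^S`. -/
theorem colored_left_convergence_iff_cauchy
    {S : Type} [Fintype S] [DecidableEq S] (W : ℕ → CGraphon S) :
    (∀ (V : Type) [Fintype V] [DecidableEq V]
        (H : SimpleGraph V) [DecidableRel H.Adj] (cH : V → S),
        ∃ L : ℝ, Tendsto (fun n => tS H cH (W n)) atTop (nhds L)) ↔
    (∀ ε : ℝ, 0 < ε → ∃ N : ℕ, ∀ m ≥ N, ∀ n ≥ N, deltaCutS (W m) (W n) < ε) := by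
  exact ⟨fun h _ hε => cauchy_of_left_convergence W h hε,
    fun h _ _ _ H _ cH => left_convergence_of_cauchy W h H cH⟩

end
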